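/- arXiv:math/0112066 — 2 statements merged into one kernel-verified Lean document; each statement's English description precedes it below -/
import Mathlib

section
/- Let S be the type of non-codegenerate d-simplices in ℝ^d, let ℬ be the free abelian group on S, and let π : ℬ → (signed measures on ℝ^d) be the group homomorphism sending the generator corresponding to a simplex Δ to its characteristic measure [Δ]. Then the kernel of π is generated, as a subgroup, by the elements (Δ) − (Δ_1) − (Δ_2) ranging over all triples of non-codegenerate d-simplices such that Δ = Δ_1 ∪ Δ_2 and Δ_1, Δ_2 have disjoint interiors. -/
open MeasureTheory

noncomputable section

/-- The type of non-codegenerate `d`-simplices in `ℝ^d`, regarded as subsets of `ℝ^d`. -/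
def NCSimplex (d : ℕ) : Type :=
  {P : Set (EuclideanSpace ℝ (Fin d)) //
    ∃ v : Fin (d + 1) → EuclideanSpace ℝ (Fin d),
      AffineIndependent ℝ v ∧
      (∀ k : Fin (d + 1),
        LinearIndependent ℝ (fun j : {j : Fin (d + 1) // j ≠ k} => v j.1)) ∧
      P = convexHull ℝ (Set.range v)}

/-- The characteristic measure `[Δ]` of a simplex, i.e. the restriction of Lebesgue measure
to `Δ`, regarded as a real-valued function on measurable sets. -/
def simplexMeasure {d : ℕ} (Δ : NCSimplex d) :
    {s : Set (EuclideanSpace ℝ (Fin d)) // MeasurableSet s} → ℝ :=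
  fun s => (volume (Δ.1 ∩ s.1)).toReal

/-!
Homogenise points `p` of `ℝ^d` to vectors `(1, p)` of `ℝ × ℝ^d`, fix a volume form `ω` there, and
attach to a family `v` of `d + 1` vectors at height `1` the sign of `ω v` times the class of the
simplex with vertices `v` modulo elementary dissections. Cutting simplices along an edge shows that
the alternating sum of this signed class over the faces of any `d + 2` vectors in general position
vanishes. Coning from a generic apex therefore rewrites a combination of simplices as a signed sum
of cones over facets.

Suppose that the corresponding signed combination of indicators vanishes at generic points.
Comparing its values on the two sides of a hyperplane `H` shows that the signed indicators of the
facets lying in `H` also cancel. Those facets are simplices of one dimension less, and the class of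
the cone over a facet, as a germ in the generic apex, is again additive under cutting along an edge.
By induction on the dimension the cones over the facets in each `H` cancel, hence so do the
simplices.
-/

universe u w

section Sign

variable {K : Type*} [Field K] [LinearOrder K] [IsStrictOrderedRing K]

/-- The sign of a scalar as an integer, bundled as a multiplicative map so that signs of products
and powers are computed by `map_mul` and `map_pow`. -/
def intSign : K →*₀ ℤ :=
  SignType.castHom.comp signHom

theorem intSign_of_pos {a : K} (ha : 0 < a) : intSign a = 1 := by
  simp [intSign, signHom, ha]

theorem intSign_of_neg {a : K} (ha : a < 0) : intSign a = -1 := by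
  simp [intSign, signHom, ha]

theorem intSign_neg (a : K) : intSign (-a) = -intSign a := by
  rw [neg_eq_neg_one_mul, map_mul, intSign_of_neg neg_one_lt_zero, neg_one_mul]

theorem intSign_neg_one_pow (k : ℕ) : intSign ((-1 : K) ^ k) = (-1) ^ k := by
  rw [map_pow, intSign_of_neg neg_one_lt_zero]

theorem intSign_mul_self {a : K} (ha : a ≠ 0) : intSign a * intSign a = 1 := by
  rw [← map_mul, intSign_of_pos (mul_self_pos.2 ha)]

end Sign

section Alternating

open Function

variable {K V ι : Type*} [Field K] [AddCommGroup V] [Module K V]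

theorem map_update_linear_combination [DecidableEq ι] (ω : V [⋀^ι]→ₗ[K] K) (v : ι → V) {i j : ι}
    (hij : i ≠ j) (a b : K) : ω (update v i (a • v i + b • v j)) = a * ω v := by
  rw [ω.map_update_add, ω.map_update_smul, ω.map_update_smul, update_eq_self,
    ω.map_update_self v hij, smul_zero, add_zero, smul_eq_mul]

theorem map_eq_zero_of_mem_span (ω : V [⋀^ι]→ₗ[K] K) {v : ι → V} {i : ι}
    (h : v i ∈ Submodule.span K (v '' {i}ᶜ)) : ω v = 0 :=
  ω.map_linearDependent v fun hv => hv.notMem_span_image (s := {i}ᶜ) (x := i) (by simp) h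

theorem map_cons_removeNth {n : ℕ} (ω : V [⋀^Fin (n + 1)]→ₗ[K] K) (v : Fin (n + 1) → V)
    (i : Fin (n + 1)) (y : V) :
    ω (Fin.cons y (i.removeNth v)) = (-1) ^ (i : ℕ) * ω (update v i y) := by
  have h := ω.neg_one_pow_smul_map_insertNth i y (i.removeNth v)
  rw [Fin.insertNth_removeNth] at h
  exact h.symm.trans (by simp)

theorem map_update_basis [DecidableEq ι] (ω : V [⋀^ι]→ₗ[K] K) (b : Module.Basis ι K V) (i : ι)
    (y : V) : ω (update b i y) = b.coord i y * ω b := by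
  have : ω.toMultilinearMap.toLinearMap b i = ω b • b.coord i := by
    refine b.ext fun j => ?_
    by_cases hij : j = i
    · subst hij
      simp
    · have hb : update (b : ι → V) i (b j) i = update b i (b j) j := by simp [hij]
      simpa [Finsupp.single_apply, hij] using ω.map_eq_zero_of_eq _ hb (Ne.symm hij)
  simpa [mul_comm] using LinearMap.congr_fun this y

theorem range_removeNth {α : Type*} {n : ℕ} (w : Fin (n + 1) → α) (k : Fin (n + 1)) :
    Set.range (k.removeNth w) = w '' {k}ᶜ := by
  rw [← Fin.range_succAbove, ← Set.range_comp]
  rfl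

theorem range_removeNth_eq_of_eq {α : Type*} {n : ℕ} {w : Fin (n + 1) → α} {i j : Fin (n + 1)}
    (hw : w i = w j) : Set.range (i.removeNth w) = Set.range (j.removeNth w) := by
  have key : ∀ {i j : Fin (n + 1)}, w i = w j →
      Set.range (i.removeNth w) ⊆ Set.range (j.removeNth w) := by
    intro i j hw
    rcases eq_or_ne i j with rfl | hij
    · rfl
    rw [range_removeNth, range_removeNth]
    rintro _ ⟨a, -, rfl⟩
    by_cases haj : a = j
    exacts [⟨i, hij, by rw [haj, hw]⟩, ⟨a, haj, rfl⟩]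
  exact (key hw).antisymm (key hw.symm)

theorem removeNth_image_compl_singleton {α : Type*} {n : ℕ} (w : Fin (n + 1) → α)
    (k : Fin (n + 1)) (m : Fin n) :
    k.removeNth w '' {m}ᶜ = w '' {k, k.succAbove m}ᶜ := by
  have : k.succAbove '' {m}ᶜ = {k, k.succAbove m}ᶜ := by
    rw [Set.image_compl_eq_range_sdiff_image Fin.succAbove_right_injective, Fin.range_succAbove,
      Set.image_singleton, Set.sdiff_eq, ← Set.compl_union, Set.singleton_union]
  rw [← this, ← Set.image_comp]
  rfl

theorem map_removeNth_update_eq_zero {n : ℕ} (ω : V [⋀^Fin n]→ₗ[K] K) {w : Fin (n + 1) → V}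
    {i j : Fin (n + 1)} (hij : i ≠ j) {q : V} (hq : q ∈ Submodule.span K (w '' {i, j}ᶜ)) :
    ω (i.removeNth (update w j q)) = 0 := by
  obtain ⟨j, rfl⟩ := Fin.exists_succAbove_eq hij.symm
  refine map_eq_zero_of_mem_span ω (i := j) ?_
  rw [removeNth_image_compl_singleton, Fin.removeNth_apply, update_self]
  rwa [Set.image_congr fun a (ha : a ∈ ({i, i.succAbove j}ᶜ : Set _)) =>
    update_of_ne (fun h => ha (Or.inr h)) q w]

end Alternating

section FacesAndRelations

open Function

variable (K : Type*) {V ι : Type*} [Field K] [AddCommGroup V] [Module K V]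

/-- No point of `X` lies in the span of a facet of `v`. For `X = {(1, 0)}` and homogenised points
this is non-codegeneracy. -/
def AvoidsFacets (X : Set V) (v : ι → V) : Prop :=
  ∀ m, ∀ x ∈ X, x ∉ Submodule.span K (v '' {m}ᶜ)

/-- No point of `X` lies in the span of a codimension two face of `w`. -/
def AvoidsRidges (X : Set V) (w : ι → V) : Prop :=
  ∀ ⦃k m⦄, k ≠ m → ∀ x ∈ X, x ∉ Submodule.span K (w '' {k, m}ᶜ)

variable {K}

theorem avoidsRidges_iff_forall_removeNth {n : ℕ} {X : Set V} {w : Fin (n + 1) → V} :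
    AvoidsRidges K X w ↔ ∀ k, AvoidsFacets K X (Fin.removeNth k w) := by
  refine ⟨fun h k m => ?_, fun h k m hkm => ?_⟩
  · rw [removeNth_image_compl_singleton]
    exact h (Fin.succAbove_ne k m).symm
  · obtain ⟨m, rfl⟩ := Fin.exists_succAbove_eq hkm.symm
    rw [← removeNth_image_compl_singleton]
    exact h k m

variable [DecidableEq ι] {i j : ι}

theorem span_image_update_le {w : ι → V} {i : ι} {q : V} {S T : Set ι}
    (hST : ∀ a ∈ S, a ≠ i → a ∈ T) (hq : q ∈ Submodule.span K (w '' T)) :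
    Submodule.span K (update w i q '' S) ≤ Submodule.span K (w '' T) := by
  rw [Submodule.span_le]
  rintro _ ⟨a, ha, rfl⟩
  by_cases hai : a = i
  · rwa [hai, update_self]
  · rw [update_of_ne hai]
    exact Submodule.subset_span ⟨a, hST a ha hai, rfl⟩

theorem AvoidsRidges.update {X : Set V} {w : ι → V} {q : V} (hw : AvoidsRidges K X w) (hij : i ≠ j)
    (hq : q ∈ Submodule.span K {w i, w j}) (hq' : q ∈ Submodule.span K (w '' {i, j}ᶜ)) :
    AvoidsRidges K X (update w i q) := by
  intro k m hkm x hx hmem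
  by_cases hi : i ∈ ({k, m} : Set ι)
  · refine hw hkm x hx ?_
    rwa [Set.image_congr fun a (ha : a ∈ ({k, m}ᶜ : Set ι)) =>
      update_of_ne (fun h : a = i => ha (h ▸ hi)) q w] at hmem
  by_cases hj : j ∈ ({k, m} : Set ι)
  · refine hw hij x hx (span_image_update_le (fun a ha hai => ?_) hq' hmem)
    rintro (rfl | rfl)
    exacts [hai rfl, ha hj]
  · refine hw hkm x hx (span_image_update_le (fun a ha _ => ha) ?_ hmem)
    exact Submodule.span_mono
      (Set.pair_subset (Set.mem_image_of_mem w hi) (Set.mem_image_of_mem w hj)) hq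

theorem support_update_update_ssubset {c : ι → K} (hij : i ≠ j) (hi : c i ≠ 0) (hj : c j ≠ 0)
    (s : K) : support (update (update c j 0) i s) ⊂ support c := by
  refine Set.ssubset_iff_of_subset (fun k hk => ?_) |>.2 ⟨j, hj, by simp [hij.symm]⟩
  by_cases hki : k = i
  · rwa [hki]
  by_cases hkj : k = j
  · rwa [hkj]
  simpa [hki, hkj] using hk

variable [Fintype ι]

theorem sum_smul_update_eq (c : ι → K) (w : ι → V) (hij : i ≠ j) {q : V}
    (hq : (c i + c j) • q = c i • w i + c j • w j) :
    ∑ k, update (update c j 0) i (c i + c j) k • update w i q k = ∑ k, c k • w k := by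
  rw [← Finset.sum_add_sum_compl {i, j}, ← Finset.sum_add_sum_compl {i, j} (fun k => c k • w k),
    Finset.sum_pair hij, Finset.sum_pair hij]
  congr 1
  · simp [hij.symm, hq]
  · refine Finset.sum_congr rfl fun k hk => ?_
    obtain ⟨hki, hkj⟩ : k ≠ i ∧ k ≠ j := by simpa using hk
    simp [hki, hkj]

omit [DecidableEq ι] in
theorem mem_span_compl_of_sum_eq_zero {c : ι → K} {w : ι → V} (hij : i ≠ j)
    (hw : ∑ k, c k • w k = 0) {q : V} (hc : c i + c j ≠ 0)
    (hq : (c i + c j) • q = c i • w i + c j • w j) : q ∈ Submodule.span K (w '' {i, j}ᶜ) := by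
  classical
  rw [← Finset.sum_add_sum_compl {i, j}, Finset.sum_pair hij, ← hq] at hw
  rw [← Submodule.smul_mem_iff _ hc, eq_neg_of_add_eq_zero_left hw]
  exact neg_mem (sum_mem fun k hk =>
    Submodule.smul_mem _ _ (Submodule.subset_span ⟨k, by simpa using hk, rfl⟩))

end FacesAndRelations

section Cocycle

open Function

variable {K V A : Type*} [Field K] [LinearOrder K] [IsStrictOrderedRing K] [AddCommGroup V]
  [Module K V] [AddCommGroup A] {n : ℕ} {l : V →ₗ[K] K} {X : Set V} {e : Set V → A}

/-- `e` is additive under cutting a simplex of the affine hyperplane `l = 1` through an interior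
point `q` of an edge, as long as the simplices involved avoid `X`. The invariant `e` is a function
of the set of vertices, hence independent of their order. -/
def IsDissectionAdditive (n : ℕ) (l : V →ₗ[K] K) (X : Set V) (e : Set V → A) : Prop :=
  ∀ ⦃v : Fin n → V⦄ ⦃i j : Fin n⦄ ⦃q : V⦄, LinearIndependent K v → (∀ k, l (v k) = 1) → i ≠ j →
    q ∈ openSegment K (v i) (v j) → AvoidsFacets K X v → AvoidsFacets K X (update v i q) →
    AvoidsFacets K X (update v j q) →
    e (Set.range v) = e (Set.range (update v i q)) + e (Set.range (update v j q))

/-- The value of `e` on the simplex with vertices `v`, counted with orientation; it vanishes on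
degenerate simplices. -/
def signedValue (ω : V [⋀^Fin n]→ₗ[K] K) (e : Set V → A) (v : Fin n → V) : A :=
  intSign (ω v) • e (Set.range v)

/-- The signed value of the boundary of the simplex with vertices `w`. -/
def boundaryValue (ω : V [⋀^Fin n]→ₗ[K] K) (e : Set V → A) (w : Fin (n + 1) → V) : A :=
  ∑ k : Fin (n + 1), (-1 : ℤ) ^ (k : ℕ) • signedValue ω e (k.removeNth w)

theorem signedValue_eq_zero {ω : V [⋀^Fin n]→ₗ[K] K} {v : Fin n → V} (h : ω v = 0) :
    signedValue ω e v = 0 := by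
  rw [signedValue, h, map_zero, zero_smul]

theorem IsDissectionAdditive.signedValue_eq_add (he : IsDissectionAdditive n l X e)
    (ω : V [⋀^Fin n]→ₗ[K] K) {v : Fin n → V} {i j : Fin n} {q : V} (hl : ∀ k, l (v k) = 1)
    (hij : i ≠ j) (hq : q ∈ openSegment K (v i) (v j)) (hv : AvoidsFacets K X v)
    (hi : AvoidsFacets K X (update v i q)) (hj : AvoidsFacets K X (update v j q)) :
    signedValue ω e v = signedValue ω e (update v i q) + signedValue ω e (update v j q) := by
  have hωi : intSign (ω (update v i q)) = intSign (ω v) := by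
    obtain ⟨a, b, ha, -, -, rfl⟩ := hq
    rw [map_update_linear_combination ω v hij, map_mul, intSign_of_pos ha, one_mul]
  have hωj : intSign (ω (update v j q)) = intSign (ω v) := by
    obtain ⟨a, b, -, hb, -, rfl⟩ := hq
    rw [add_comm, map_update_linear_combination ω v hij.symm, map_mul, intSign_of_pos hb, one_mul]
  rw [signedValue, signedValue, signedValue, hωi, hωj, ← smul_add]
  by_cases hlin : LinearIndependent K v
  · rw [he hlin hl hij hq hv hi hj]
  · rw [ω.map_linearDependent v hlin, map_zero, zero_smul, zero_smul]

omit [IsStrictOrderedRing K] in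
theorem mem_span_pair_of_mem_openSegment {x y q : V} (hq : q ∈ openSegment K x y) :
    q ∈ Submodule.span K {x, y} := by
  obtain ⟨a, b, -, -, -, rfl⟩ := hq
  exact Submodule.mem_span_pair.2 ⟨a, b, rfl⟩

theorem IsDissectionAdditive.boundaryValue_eq_add (he : IsDissectionAdditive n l X e)
    (ω : V [⋀^Fin n]→ₗ[K] K) {w : Fin (n + 1) → V} {i j : Fin (n + 1)} {q : V}
    (hl : ∀ k, l (w k) = 1) (hw : AvoidsRidges K X w) (hij : i ≠ j)
    (hq : q ∈ openSegment K (w i) (w j)) (hq' : q ∈ Submodule.span K (w '' {i, j}ᶜ)) :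
    boundaryValue ω e w = boundaryValue ω e (update w i q) + boundaryValue ω e (update w j q) := by
  have hji : q ∈ Submodule.span K (w '' {j, i}ᶜ) := by rwa [Set.pair_comm]
  have hspan := mem_span_pair_of_mem_openSegment hq
  have hwi := avoidsRidges_iff_forall_removeNth.1 (hw.update hij hspan hq')
  have hwj := avoidsRidges_iff_forall_removeNth.1
    (hw.update hij.symm (by rwa [Set.pair_comm]) hji)
  rw [avoidsRidges_iff_forall_removeNth] at hw
  simp only [boundaryValue, ← Finset.sum_add_distrib, ← smul_add]
  refine Finset.sum_congr rfl fun k _ => congrArg _ ?_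
  by_cases hki : k = i
  · rw [hki, Fin.removeNth_update, signedValue_eq_zero (map_removeNth_update_eq_zero ω hij hq'),
      add_zero]
  by_cases hkj : k = j
  · rw [hkj, Fin.removeNth_update,
      signedValue_eq_zero (map_removeNth_update_eq_zero ω hij.symm hji), zero_add]
  have hwk := hw k
  have hwik := hwi k
  have hwjk := hwj k
  obtain ⟨i, rfl⟩ := Fin.exists_succAbove_eq (Ne.symm hki)
  obtain ⟨j, rfl⟩ := Fin.exists_succAbove_eq (Ne.symm hkj)
  rw [Fin.removeNth_update_succAbove] at hwik hwjk ⊢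
  rw [Fin.removeNth_update_succAbove]
  exact he.signedValue_eq_add ω (fun _ => hl _) (fun h => hij (congrArg _ h)) hq hwk hwik hwjk

theorem boundaryValue_eq_zero_of_eq (ω : V [⋀^Fin n]→ₗ[K] K) (e : Set V → A)
    {w : Fin (n + 1) → V} {i j : Fin (n + 1)} (hij : i ≠ j) (hw : w i = w j) :
    boundaryValue ω e w = 0 := by
  have hsign : (-1 : ℤ) ^ (i : ℕ) * intSign (ω (i.removeNth w)) =
      -((-1) ^ (j : ℕ) * intSign (ω (j.removeNth w))) := by
    have h := eq_neg_of_add_eq_zero_left (ω.neg_one_pow_smul_map_removeNth_add_eq_zero_of_eq hw hij)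
    have h' : (-1) ^ (i : ℕ) * ω (i.removeNth w) = -((-1) ^ (j : ℕ) * ω (j.removeNth w)) := by
      simpa using h
    rw [← intSign_neg_one_pow (K := K), ← intSign_neg_one_pow (K := K), ← map_mul, ← map_mul, h',
      intSign_neg]
  rw [boundaryValue, Fintype.sum_eq_add i j hij]
  · rw [signedValue, signedValue, range_removeNth_eq_of_eq hw, smul_smul, smul_smul, ← add_smul,
      hsign, neg_add_cancel, zero_smul]
  · rintro k ⟨hki, hkj⟩
    obtain ⟨i, rfl⟩ := Fin.exists_succAbove_eq (Ne.symm hki)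
    obtain ⟨j, rfl⟩ := Fin.exists_succAbove_eq (Ne.symm hkj)
    have hω : ω (k.removeNth w) = 0 :=
      ω.map_eq_zero_of_eq (k.removeNth w) (i := i) (j := j) hw fun h => hij (congrArg _ h)
    rw [signedValue_eq_zero hω, smul_zero]

theorem exists_mem_openSegment_smul_eq {a b : K} (hab : 0 < a * b) (x y : V) :
    ∃ q ∈ openSegment K x y, (a + b) • q = a • x + b • y := by
  have hdiv : 0 < a / (a + b) ∧ 0 < b / (a + b) := by
    rcases pos_and_pos_or_neg_and_neg_of_mul_pos hab with ⟨ha, hb⟩ | ⟨ha, hb⟩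
    · exact ⟨div_pos ha (add_pos ha hb), div_pos hb (add_pos ha hb)⟩
    · exact ⟨div_pos_of_neg_of_neg ha (add_neg ha hb), div_pos_of_neg_of_neg hb (add_neg ha hb)⟩
  have hne : a + b ≠ 0 := fun h => by simp [h] at hdiv
  refine ⟨(a / (a + b)) • x + (b / (a + b)) • y,
    ⟨_, _, hdiv.1, hdiv.2, by rw [← add_div, div_self hne], rfl⟩, ?_⟩
  rw [smul_add, smul_smul, smul_smul, mul_div_cancel₀ _ hne, mul_div_cancel₀ _ hne]

theorem exists_pair_of_sum_eq_zero {ι : Type*} [Fintype ι] {c : ι → K} (hc : c ≠ 0)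
    (hsum : ∑ k, c k = 0) (hsign : ∀ i j, i ≠ j → c i * c j ≤ 0) :
    ∃ i j, i ≠ j ∧ c i ≠ 0 ∧ c j = -c i ∧ ∀ k, k ≠ i → k ≠ j → c k = 0 := by
  have hne : ¬ ∀ k, c k = 0 := fun h => hc (funext h)
  obtain ⟨i, hi⟩ : ∃ i, 0 < c i := by
    by_contra! h
    exact hne fun k =>
      (Finset.sum_eq_zero_iff_of_nonpos fun k _ => h k).1 hsum k (Finset.mem_univ k)
  obtain ⟨j, hj⟩ : ∃ j, c j < 0 := by
    by_contra! h
    exact hne fun k =>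
      (Finset.sum_eq_zero_iff_of_nonneg fun k _ => h k).1 hsum k (Finset.mem_univ k)
  have hij : i ≠ j := fun h => (h ▸ hi).not_gt hj
  have hzero : ∀ k, k ≠ i → k ≠ j → c k = 0 := fun k hki hkj =>
    le_antisymm (nonpos_of_mul_nonpos_right (hsign i k hki.symm) hi)
      (nonneg_of_mul_nonpos_right (hsign j k hkj.symm) hj)
  rw [Fintype.sum_eq_add i j hij fun k hk => hzero k hk.1 hk.2] at hsum
  exact ⟨i, j, hij, hi.ne', eq_neg_of_add_eq_zero_right hsum, hzero⟩

/-- Two vertices whose coefficients in the relation have the same sign can be merged into a point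
of the edge between them, which shortens the relation; a relation without such a pair identifies
two vertices. -/
theorem IsDissectionAdditive.boundaryValue_eq_zero (he : IsDissectionAdditive n l X e)
    (ω : V [⋀^Fin n]→ₗ[K] K) {w : Fin (n + 1) → V} (hl : ∀ k, l (w k) = 1)
    (hw : AvoidsRidges K X w) {c : Fin (n + 1) → K} (hc : c ≠ 0) (hcw : ∑ k, c k • w k = 0) :
    boundaryValue ω e w = 0 := by
  induction hN : (support c).ncard using Nat.strong_induction_on generalizing w c with
  | h N ih =>
  by_cases hpair : ∃ i j, i ≠ j ∧ 0 < c i * c j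
  · obtain ⟨i, j, hij, hcij⟩ := hpair
    obtain ⟨q, hq, hqc⟩ := exists_mem_openSegment_smul_eq hcij (w i) (w j)
    have merge : ∀ i j, i ≠ j → 0 < c i * c j → q ∈ openSegment K (w i) (w j) →
        (c i + c j) • q = c i • w i + c j • w j →
        q ∈ Submodule.span K (w '' {i, j}ᶜ) ∧ boundaryValue ω e (update w i q) = 0 := by
      intro i j hij hcij hq hqc
      have hs : c i + c j ≠ 0 := fun h => hcij.not_ge <| by
        rw [eq_neg_of_add_eq_zero_right h, mul_neg]
        exact neg_nonpos.2 (mul_self_nonneg _)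
      have hq' := mem_span_compl_of_sum_eq_zero hij hcw hs hqc
      have hlq : l q = 1 := by
        obtain ⟨a, b, -, -, hab, rfl⟩ := hq
        simp [hl, hab]
      refine ⟨hq', ih _ ?_ (c := update (update c j 0) i (c i + c j)) ?_
        (hw.update hij (mem_span_pair_of_mem_openSegment hq) hq') ?_ ?_ rfl⟩
      · rw [← hN]
        exact Set.ncard_lt_ncard (support_update_update_ssubset hij
          (left_ne_zero_of_mul hcij.ne') (right_ne_zero_of_mul hcij.ne') _)
      · intro k
        by_cases hk : k = i <;> simp [hk, hl, hlq]
      · exact fun h => hs (by simpa using congrFun h i)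
      · rw [sum_smul_update_eq c w hij hqc, hcw]
    obtain ⟨hq', hi⟩ := merge i j hij hcij hq hqc
    obtain ⟨-, hj⟩ := merge j i hij.symm (mul_comm (c i) _ ▸ hcij)
      (openSegment_symm K (w i) (w j) ▸ hq) (by rw [add_comm, hqc, add_comm])
    rw [he.boundaryValue_eq_add ω hl hw hij hq hq', hi, hj, add_zero]
  · push Not at hpair
    have hsum : ∑ k, c k = 0 := by simpa [hl] using congrArg l hcw
    obtain ⟨i, j, hij, hci, hcj, hzero⟩ := exists_pair_of_sum_eq_zero hc hsum hpair
    refine boundaryValue_eq_zero_of_eq ω e hij ?_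
    rw [Fintype.sum_eq_add i j hij fun k hk => by rw [hzero k hk.1 hk.2, zero_smul], hcj, neg_smul,
      ← sub_eq_add_neg, ← smul_sub] at hcw
    exact sub_eq_zero.1 ((smul_eq_zero.1 hcw).resolve_left hci)

end Cocycle

section Generic

open Filter

variable (K V : Type*) [Field K] [AddCommGroup V] [Module K V]

/-- The filter of generic vectors, generated by the complements of hyperplanes through the origin.
-/
def generic : Filter V :=
  ⨅ φ : {φ : V →ₗ[K] K // φ ≠ 0}, 𝓟 {x | φ.1 x ≠ 0}

instance generic_neBot [Infinite K] : (generic K V).NeBot := by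
  rw [generic, (hasBasis_iInf_principal_finite _).neBot_iff]
  intro t ht
  have := ht.to_subtype
  have hcover : (⋃ φ : t, (LinearMap.ker φ.1.1 : Set V)) ≠ Set.univ := fun h => by
    obtain ⟨φ, hφ⟩ := Subspace.exists_eq_top_of_iUnion_eq_univ h
    exact φ.1.2 (LinearMap.ker_eq_top.1 hφ)
  obtain ⟨x, hx⟩ := (Set.ne_univ_iff_exists_notMem _).1 hcover
  exact ⟨x, Set.mem_iInter₂.2 fun φ hφ h => hx (Set.mem_iUnion.2 ⟨⟨φ, hφ⟩, h⟩)⟩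

variable {K V}

theorem eventually_generic_ne_zero {φ : V →ₗ[K] K} (h : φ ≠ 0) : ∀ᶠ x in generic K V, φ x ≠ 0 :=
  mem_iInf_of_mem ⟨φ, h⟩ (mem_principal_self _)

theorem eventually_generic_notMem {W : Submodule K V} (h : W ≠ ⊤) : ∀ᶠ x in generic K V, x ∉ W := by
  obtain ⟨φ, h0, hφ⟩ := W.exists_le_ker_of_lt_top h.lt_top
  filter_upwards [eventually_generic_ne_zero h0] with x hx hxW
  exact hx (hφ hxW)

/-- The filter of generic points of the affine hyperplane `l = 1`, obtained by rescaling generic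
vectors. -/
def genericSlice (l : V →ₗ[K] K) : Filter V :=
  (generic K V).map fun u => (l u)⁻¹ • u

variable {l : V →ₗ[K] K}

instance genericSlice_neBot [Infinite K] : (genericSlice l).NeBot :=
  map_neBot

theorem eventually_genericSlice_apply (hl : l ≠ 0) : ∀ᶠ p in genericSlice l, l p = 1 := by
  refine eventually_map.2 ?_
  filter_upwards [eventually_generic_ne_zero hl] with u hu
  rw [map_smul, smul_eq_mul, inv_mul_cancel₀ hu]

theorem eventually_genericSlice_notMem (hl : l ≠ 0) {W : Submodule K V} (hW : W ≠ ⊤) :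
    ∀ᶠ p in genericSlice l, p ∉ W := by
  refine eventually_map.2 ?_
  filter_upwards [eventually_generic_ne_zero hl, eventually_generic_notMem hW] with u hlu hu
  rwa [Submodule.smul_mem_iff _ (inv_ne_zero hlu)]

theorem eventually_genericSlice_notMem_span_insert (hl : l ≠ 0) {x : V} {T : Set V}
    (hx : x ∉ Submodule.span K T) (hT : Submodule.span K (insert x T) ≠ ⊤) :
    ∀ᶠ p in genericSlice l, x ∉ Submodule.span K (insert p T) := by
  filter_upwards [eventually_genericSlice_notMem hl hT] with p hp h
  exact hp (mem_span_insert_exchange h hx)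

end Generic

section Cones

open Function

variable {K V ι : Type*} [Field K] [LinearOrder K] [IsStrictOrderedRing K] [AddCommGroup V]
  [Module K V] [Fintype ι]

variable (K) in
/-- The set of linear combinations of `v` with positive coefficients: the open cone over the simplex
with vertices `v`, if `v` is linearly independent. -/
def openCone (v : ι → V) : Set V :=
  {x | ∃ c : ι → K, (∀ i, 0 < c i) ∧ ∑ i, c i • v i = x}

/-- The indicator function of the open cone over `v`, counted with orientation. -/
def signedIndicator (ω : V [⋀^ι]→ₗ[K] K) (v : ι → V) : V → ℤ :=
  (openCone K v).indicator fun _ => intSign (ω v)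

omit [IsStrictOrderedRing K] in
theorem mem_openCone_basis (b : Module.Basis ι K V) {x : V} :
    x ∈ openCone K b ↔ ∀ i, 0 < b.coord i x := by
  refine ⟨?_, fun h => ⟨_, h, b.sum_repr x⟩⟩
  rintro ⟨c, hc, rfl⟩ i
  rw [Module.Basis.coord_apply, b.repr_sum_self]
  exact hc i

end Cones

section Hyperplane

open Filter Topology Function

variable {K V : Type*} [Field K] [AddCommGroup V] [Module K V] {n : ℕ} {h : V →ₗ[K] K}

/-- The alternating form induced by `ω` on the hyperplane `h = 0`, with conormal vector `y`. -/
def hyperplaneForm (ω : V [⋀^Fin (n + 1)]→ₗ[K] K) (h : V →ₗ[K] K) (y : V) :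
    LinearMap.ker h [⋀^Fin n]→ₗ[K] K :=
  (ω.curryLeft y).compLinearMap (LinearMap.ker h).subtype

theorem hyperplaneForm_apply (ω : V [⋀^Fin (n + 1)]→ₗ[K] K) (y : V)
    (F : Fin n → LinearMap.ker h) :
    hyperplaneForm ω h y F = ω (Fin.cons y fun k => (F k : V)) :=
  rfl

/-- The facet opposite to the `i`th vector of a basis, as a basis of the hyperplane it spans. -/
def facetBasis (b : Module.Basis (Fin (n + 1)) K V) (i : Fin (n + 1))
    (hi : LinearMap.ker (b.coord i) = LinearMap.ker h) : Module.Basis (Fin n) K (LinearMap.ker h) :=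
  .mk (v := fun k => ⟨i.removeNth b k, by simp [← hi, Fin.removeNth_apply]⟩)
    (.of_comp (LinearMap.ker h).subtype
      (b.linearIndependent.comp i.succAbove Fin.succAbove_right_injective))
    fun x _ => by
      have hx : b.repr x i = 0 := hi.ge x.2
      refine (Submodule.mem_span_range_iff_exists_fun K).2
        ⟨fun m => b.repr x (i.succAbove m), Subtype.ext ?_⟩
      have hsum := b.sum_repr (x : V)
      rw [Fin.sum_univ_succAbove _ i, hx, zero_smul, zero_add] at hsum
      simpa [Fin.removeNth_apply] using hsum

variable (b : Module.Basis (Fin (n + 1)) K V) (i : Fin (n + 1))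
  (hi : LinearMap.ker (b.coord i) = LinearMap.ker h)

theorem coe_facetBasis_apply (m : Fin n) : (facetBasis b i hi m : V) = b (i.succAbove m) := by
  simp [facetBasis, Fin.removeNth_apply]

theorem facetBasis_coord_apply (m : Fin n) (x : LinearMap.ker h) :
    (facetBasis b i hi).coord m x = b.coord (i.succAbove m) x := by
  suffices (facetBasis b i hi).coord m =
      b.coord (i.succAbove m) ∘ₗ (LinearMap.ker h).subtype from LinearMap.congr_fun this x
  refine (facetBasis b i hi).ext fun k => ?_
  simp [coe_facetBasis_apply, Finsupp.single_apply]

theorem hyperplaneForm_facetBasis (ω : V [⋀^Fin (n + 1)]→ₗ[K] K) (y : V) :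
    hyperplaneForm ω h y (facetBasis b i hi) = (-1) ^ (i : ℕ) * (b.coord i y * ω b) := by
  rw [hyperplaneForm_apply, ← map_update_basis, ← map_cons_removeNth]
  exact congrArg (fun F => ω (Fin.cons y F)) (funext (coe_facetBasis_apply b i hi))

theorem subsingleton_coord_ker_eq {ι : Type*} (b : Module.Basis ι K V) (h : V →ₗ[K] K) :
    Subsingleton {i // LinearMap.ker (b.coord i) = LinearMap.ker h} := by
  classical
  refine ⟨fun ⟨i, hi⟩ ⟨k, hk⟩ => Subtype.ext (by_contra fun hik => ?_)⟩
  have hmem : b i ∈ LinearMap.ker (b.coord i) := by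
    rw [hi, ← hk]
    simpa [Finsupp.single_apply] using hik
  simp at hmem

theorem ker_eq_ker_of_comp_subtype_eq_zero {φ : V →ₗ[K] K} (hh : h ≠ 0) (hφ : φ ≠ 0)
    (h0 : φ ∘ₗ (LinearMap.ker h).subtype = 0) : LinearMap.ker φ = LinearMap.ker h := by
  refine ((LinearMap.isCoatom_ker_of_surjective (LinearMap.surjective hh)).le_iff_eq
    (mt LinearMap.ker_eq_top.1 hφ)).1 fun z hz => ?_
  exact LinearMap.congr_fun h0 ⟨z, hz⟩

theorem coord_ne_zero {ι : Type*} (b : Module.Basis ι K V) (i : ι) : b.coord i ≠ 0 :=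
  fun h0 => by simpa using LinearMap.congr_fun h0 (b i)

variable [LinearOrder K] [IsStrictOrderedRing K]

theorem intSign_eq_ite_sub_ite (a : K) :
    intSign a = (if 0 < a then 1 else 0) - if 0 < -a then 1 else 0 := by
  rcases lt_trichotomy a 0 with ha | rfl | ha
  · rw [intSign_of_neg ha, if_neg ha.not_gt, if_pos (neg_pos.2 ha), zero_sub]
  · simp
  · rw [intSign_of_pos ha, if_pos ha, if_neg (neg_neg_of_pos ha).not_gt, sub_zero]

variable [TopologicalSpace K] [OrderTopology K] {y : V}

theorem eventually_pos_map_add_smul_iff {φ : V →ₗ[K] K} {x : V} (hx : φ x ≠ 0) (y : V) :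
    ∀ᶠ ε in 𝓝 (0 : K), (0 < φ (x + ε • y) ↔ 0 < φ x) := by
  have hcont : ContinuousAt (fun ε : K => φ (x + ε • y)) 0 := by
    simp only [map_add, map_smul, smul_eq_mul]
    fun_prop
  have h0 : φ (x + (0 : K) • y) = φ x := by rw [zero_smul, add_zero]
  rcases hx.lt_or_gt with hlt | hgt
  · filter_upwards [hcont.eventually_lt_const (h0.trans_lt hlt)] with ε hε
    exact iff_of_false hε.not_gt hlt.not_gt
  · filter_upwards [hcont.eventually_const_lt (hgt.trans_eq h0.symm)] with ε hε
    exact iff_of_true hε hgt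

theorem eventually_map_add_smul_ne_zero {φ : V →ₗ[K] K} {x : V} (hx : φ x ≠ 0) (y : V) :
    ∀ᶠ ε in 𝓝 (0 : K), φ (x + ε • y) ≠ 0 := by
  have hcont : ContinuousAt (fun ε : K => φ (x + ε • y)) 0 := by
    simp only [map_add, map_smul, smul_eq_mul]
    fun_prop
  exact hcont.eventually_ne (by rwa [zero_smul, add_zero])

theorem eventually_generic_ker (hy : h y ≠ 0) {p : V → Prop} (hp : ∀ᶠ z in generic K V, p z) :
    ∀ᶠ x : LinearMap.ker h in generic K (LinearMap.ker h), ∀ᶠ ε in 𝓝[≠] (0 : K),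
      p ((x : V) + ε • y) := by
  have hh : h ≠ 0 := fun h0 => hy (by rw [h0]; rfl)
  suffices (generic K (LinearMap.ker h)).bind
      (fun x => (𝓝[≠] (0 : K)).map fun ε => (x : V) + ε • y) ≤ generic K V from this hp
  refine le_iInf fun ⟨φ, hφ⟩ => le_principal_iff.2 (mem_bind'.2 ?_)
  by_cases h0 : φ ∘ₗ (LinearMap.ker h).subtype = 0
  · have hφy : φ y ≠ 0 := by
      rwa [Ne, ← LinearMap.mem_ker, ker_eq_ker_of_comp_subtype_eq_zero hh hφ h0]
    refine Eventually.of_forall fun x => ?_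
    have hx : φ x = 0 := LinearMap.congr_fun h0 x
    change ∀ᶠ ε in 𝓝[≠] (0 : K), φ ((x : V) + ε • y) ≠ 0
    filter_upwards [self_mem_nhdsWithin] with ε hε
    rw [map_add, hx, zero_add, map_smul]
    exact smul_ne_zero hε hφy
  · filter_upwards [eventually_generic_ne_zero h0] with x hx
    have hx' : φ (x : V) ≠ 0 := hx
    exact (eventually_map_add_smul_ne_zero hx' y).filter_mono nhdsWithin_le_nhds

theorem eventually_forall_coord_pos_iff {ι : Type*} [Finite ι] (b : Module.Basis ι K V) (h0 : h ≠ 0)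
    (y : V) : ∀ᶠ x : LinearMap.ker h in generic K (LinearMap.ker h), ∀ᶠ ε in 𝓝 (0 : K),
      ∀ i, LinearMap.ker (b.coord i) ≠ LinearMap.ker h →
        (0 < b.coord i ((x : V) + ε • y) ↔ 0 < b.coord i x) := by
  have hne : ∀ᶠ x : LinearMap.ker h in generic K (LinearMap.ker h), ∀ i,
      LinearMap.ker (b.coord i) ≠ LinearMap.ker h → b.coord i x ≠ 0 :=
    eventually_all.2 fun i => eventually_imp_distrib_left.2 fun hi =>
      eventually_generic_ne_zero fun hcomp =>
        hi (ker_eq_ker_of_comp_subtype_eq_zero h0 (coord_ne_zero b i) hcomp)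
  filter_upwards [hne] with x hx
  exact eventually_all.2 fun i => eventually_imp_distrib_left.2 fun hi =>
    eventually_pos_map_add_smul_iff (hx i hi) y

theorem eventually_mem_openCone_iff_of_facet (h0 : h ≠ 0) (y : V) :
    ∀ᶠ x : LinearMap.ker h in generic K (LinearMap.ker h), ∀ᶠ ε in 𝓝[>] (0 : K),
      ((x : V) + ε • y ∈ openCone K b ↔
        0 < b.coord i y ∧ x ∈ openCone K (facetBasis b i hi)) := by
  filter_upwards [eventually_forall_coord_pos_iff b h0 y] with x hx
  filter_upwards [hx.filter_mono nhdsWithin_le_nhds, self_mem_nhdsWithin] with ε hε hpos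
  have hxi : b.coord i x = 0 := by
    rw [← LinearMap.mem_ker, hi]
    exact x.2
  rw [mem_openCone_basis, mem_openCone_basis, Fin.forall_iff_succAbove i]
  refine and_congr ?_ (forall_congr' fun m => ?_)
  · rw [map_add, hxi, zero_add, map_smul, smul_eq_mul, mul_pos_iff_of_pos_left hpos]
  · have := subsingleton_coord_ker_eq b h
    have hm : LinearMap.ker (b.coord (i.succAbove m)) ≠ LinearMap.ker h := fun hm =>
      Fin.succAbove_ne i m (congrArg Subtype.val (Subsingleton.elim
        (⟨_, hm⟩ : {k // LinearMap.ker (b.coord k) = LinearMap.ker h}) ⟨i, hi⟩))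
    rw [facetBasis_coord_apply, hε _ hm]

theorem eventually_mem_openCone_iff_of_no_facet {ι : Type*} [Fintype ι] (b : Module.Basis ι K V)
    (h0 : h ≠ 0) (y : V) (hb : ∀ i, LinearMap.ker (b.coord i) ≠ LinearMap.ker h) :
    ∀ᶠ x : LinearMap.ker h in generic K (LinearMap.ker h), ∀ᶠ ε in 𝓝 (0 : K),
      ((x : V) + ε • y ∈ openCone K b ↔ (x : V) ∈ openCone K b) := by
  filter_upwards [eventually_forall_coord_pos_iff b h0 y] with x hx
  filter_upwards [hx] with ε hε
  simp only [mem_openCone_basis]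
  exact forall_congr' fun i => hε i (hb i)

open Classical in
theorem eventually_signedIndicator_sub_eq_sum_facets (ω : V [⋀^Fin (n + 1)]→ₗ[K] K) (h0 : h ≠ 0)
    (y : V) :
    ∀ᶠ x : LinearMap.ker h in generic K (LinearMap.ker h), ∀ᶠ ε in 𝓝[>] (0 : K),
      signedIndicator ω b (x + ε • y) - signedIndicator ω b (x + ε • -y) =
        ∑ i : {i // LinearMap.ker (b.coord i) = LinearMap.ker h},
          (-1) ^ (i : ℕ) * signedIndicator (hyperplaneForm ω h y) (facetBasis b i i.2) x := by
  have := subsingleton_coord_ker_eq b h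
  by_cases hb : ∃ i, LinearMap.ker (b.coord i) = LinearMap.ker h
  · obtain ⟨i, hi⟩ := hb
    filter_upwards [eventually_mem_openCone_iff_of_facet b i hi h0 y,
      eventually_mem_openCone_iff_of_facet b i hi h0 (-y)] with x hx hx'
    filter_upwards [hx, hx'] with ε hε hε'
    rw [Fintype.sum_subsingleton _ ⟨i, hi⟩]
    simp only [signedIndicator, Set.indicator_apply, hε, hε', hyperplaneForm_facetBasis, map_mul,
      intSign_neg_one_pow, intSign_eq_ite_sub_ite (b.coord i y), map_neg]
    have hsq : (-1 : ℤ) ^ (i : ℕ) * (-1) ^ (i : ℕ) = 1 := by rw [← mul_pow]; simp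
    by_cases hcone : x ∈ openCone K (facetBasis b i hi)
    · simp only [hcone, and_true, if_true, ← mul_assoc, hsq]
      split_ifs <;> ring
    · simp [hcone]
  · push Not at hb
    have : IsEmpty {i // LinearMap.ker (b.coord i) = LinearMap.ker h} := ⟨fun i => hb i i.2⟩
    filter_upwards [eventually_mem_openCone_iff_of_no_facet b h0 y hb,
      eventually_mem_openCone_iff_of_no_facet b h0 (-y) hb] with x hx hx'
    filter_upwards [hx.filter_mono nhdsWithin_le_nhds, hx'.filter_mono nhdsWithin_le_nhds]
      with ε hε hε'
    simp only [signedIndicator, Set.indicator_apply, hε, hε', sub_self, Finset.univ_eq_empty,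
      Finset.sum_empty]

open Classical in
theorem eventually_sum_facets_eq_zero {ι : Type*} [Fintype ι] (ω : V [⋀^Fin (n + 1)]→ₗ[K] K)
    (a : ι → ℤ) (b : ι → Module.Basis (Fin (n + 1)) K V) (hy : h y ≠ 0)
    (hab : ∀ᶠ z in generic K V, ∑ j, a j * signedIndicator ω (b j) z = 0) :
    ∀ᶠ x : LinearMap.ker h in generic K (LinearMap.ker h),
      ∑ q : {q : ι × Fin (n + 1) // LinearMap.ker ((b q.1).coord q.2) = LinearMap.ker h},
        a q.1.1 * (-1) ^ (q.1.2 : ℕ) *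
          signedIndicator (hyperplaneForm ω h y) (facetBasis (b q.1.1) q.1.2 q.2) x = 0 := by
  have h0 : h ≠ 0 := fun h0 => hy (by rw [h0]; rfl)
  have hy' : h (-y) ≠ 0 := by rwa [map_neg, neg_ne_zero]
  have hjump := eventually_all.2 fun j =>
    eventually_signedIndicator_sub_eq_sum_facets (b j) ω h0 y
  filter_upwards [hjump, eventually_generic_ker hy hab, eventually_generic_ker hy' hab]
    with x hx hpos hneg
  obtain ⟨ε, hε, hεpos, hεneg⟩ := ((eventually_all.2 hx).and
    ((hpos.filter_mono (nhdsGT_le_nhdsNE 0)).and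
      (hneg.filter_mono (nhdsGT_le_nhdsNE 0)))).exists
  let Φ := Equiv.subtypeProdEquivSigmaSubtype fun j i =>
    LinearMap.ker ((b j).coord i) = LinearMap.ker h
  rw [← Φ.symm.sum_comp, Fintype.sum_sigma]
  calc _ = ∑ j, a j *
        (signedIndicator ω (b j) (x + ε • y) - signedIndicator ω (b j) (x + ε • -y)) := by
          refine Finset.sum_congr rfl fun j _ => ?_
          rw [hε, Finset.mul_sum]
          exact Finset.sum_congr rfl fun i _ => mul_assoc _ _ _
    _ = 0 := by simp only [mul_sub, Finset.sum_sub_distrib, hεpos, hεneg, sub_zero]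

end Hyperplane

section Apex

open Filter Function

variable {K V : Type*} [Field K] [AddCommGroup V] [Module K V] {n : ℕ} {l h : V →ₗ[K] K}
  {X : Set V}

theorem cons_image_compl_succ {α : Type*} (p : α) (v : Fin n → α) (k : Fin n) :
    (Fin.cons p v : Fin (n + 1) → α) '' {k.succ}ᶜ = insert p (v '' {k}ᶜ) := by
  cases n with
  | zero => exact k.elim0
  | succ n =>
    rw [← range_removeNth, ← range_removeNth, ← Fin.range_cons]
    exact congrArg Set.range (Fin.cons_comp_succ_succAbove p v k)

theorem avoidsRidges_cons {p : V} {v : Fin (n + 1) → V} (hv : AvoidsFacets K X v)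
    (hp : ∀ i : Fin (n + 1), AvoidsFacets K X (Fin.cons p (i.removeNth v) : Fin (n + 1) → V)) :
    AvoidsRidges K X (Fin.cons p v : Fin (n + 2) → V) :=
  avoidsRidges_iff_forall_removeNth.2 (Fin.cases hv fun i => by
    have := hp i
    rwa [← Fin.cons_comp_succ_succAbove] at this)

theorem eventually_avoidsFacets_cons (hl : l ≠ 0) (hX : X.Finite)
    (hdim : Module.finrank K V = n + 1) {v : Fin n → V}
    (hv : ∀ x ∈ X, x ∉ Submodule.span K (Set.range v)) :
    ∀ᶠ p in genericSlice l, AvoidsFacets K X (Fin.cons p v : Fin (n + 1) → V) := by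
  refine eventually_all.2 fun m => (eventually_all_finite hX).2 fun x hx => ?_
  refine Fin.cases ?_ (fun k => ?_) m
  · refine Eventually.of_forall fun p => ?_
    rw [← range_removeNth, Fin.removeNth_zero, Fin.tail_cons]
    exact hv x hx
  · simp only [cons_image_compl_succ]
    refine eventually_genericSlice_notMem_span_insert hl
      (fun hmem => hv x hx (Submodule.span_mono (Set.image_subset_range _ _) hmem)) fun htop => ?_
    have hle : insert x (v '' {k}ᶜ) ⊆ Set.range (update v k x) := by
      refine Set.insert_subset ⟨k, update_self k x v⟩ ?_
      rintro _ ⟨a, ha, rfl⟩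
      exact ⟨a, update_of_ne ha x v⟩
    have hcard := finrank_range_le_card (R := K) (update v k x)
    rw [Set.finrank, eq_top_mono (Submodule.span_mono hle) htop, finrank_top, hdim,
      Fintype.card_fin] at hcard
    exact absurd hcard (Nat.not_succ_le_self n)

theorem map_cons_eq_mul_of_forall_mem_ker (ω : V [⋀^Fin (n + 1)]→ₗ[K] K)
    (hdim : Module.finrank K V = n + 1) {y : V} (hy : h y = 1) {F : Fin n → V}
    (hF : ∀ k, h (F k) = 0) (p : V) : ω (Fin.cons p F) = h p * ω (Fin.cons y F) := by
  have hadd : ∀ x z : V, ω (Fin.cons (x + z) F) = ω (Fin.cons x F) + ω (Fin.cons z F) := by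
    simpa using fun x z => ω.map_update_add (Fin.cons 0 F) 0 x z
  have hsmul : ∀ (c : K) (x : V), ω (Fin.cons (c • x) F) = c * ω (Fin.cons x F) := by
    simpa using fun c x => ω.map_update_smul (Fin.cons 0 F) 0 c x
  have hker : ∀ x, h x = 0 → ω (Fin.cons x F) = 0 := by
    refine fun x hx => ω.map_linearDependent _ fun hlin => ?_
    have htop := hlin.span_eq_top_of_card_eq_finrank (by rw [Fintype.card_fin, hdim])
    have hle : Submodule.span K (Set.range (Fin.cons x F : Fin (n + 1) → V)) ≤ LinearMap.ker h :=
      Submodule.span_le.2 (Set.range_subset_iff.2 (Fin.cases hx hF))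
    rw [htop, top_le_iff, LinearMap.ker_eq_top] at hle
    simp [hle] at hy
  calc ω (Fin.cons p F) = ω (Fin.cons (p - h p • y + h p • y) F) := by rw [sub_add_cancel]
    _ = h p * ω (Fin.cons y F) := by rw [hadd, hsmul, hker _ (by simp [hy]), zero_add]

end Apex

section ConeInvariant

open Filter Function

variable {K V A : Type*} [Field K] [LinearOrder K] [IsStrictOrderedRing K] [AddCommGroup V]
  [Module K V] [AddCommGroup A] {n : ℕ} {l h : V →ₗ[K] K} {X : Set V} {e : Set V → A}

/-- The invariant of simplices in the hyperplane `h = 0` given by the cones over them with a generic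
apex, counted according to the side of the hyperplane on which the apex lies. Its values are germs
in the apex. -/
def coneInvariant (l h : V →ₗ[K] K) (e : Set V → A) (T : Set (LinearMap.ker h)) :
    Germ (genericSlice l) A :=
  ↑fun p => intSign (h p) • e (insert p (Subtype.val '' T))

theorem signedValue_coneInvariant (ω : V [⋀^Fin (n + 1)]→ₗ[K] K)
    (hdim : Module.finrank K V = n + 1) {y : V} (hy : h y = 1) (F : Fin n → LinearMap.ker h) :
    signedValue (hyperplaneForm ω h y) (coneInvariant l h e) F =
      ↑fun p => signedValue ω e (Fin.cons p fun k => (F k : V)) := by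
  refine congrArg Germ.ofFun (funext fun p => ?_)
  change intSign (ω (Fin.cons y fun k => (F k : V))) • intSign (h p) •
    e (insert p (Subtype.val '' Set.range F)) = _
  rw [signedValue, map_cons_eq_mul_of_forall_mem_ker ω hdim hy (fun k => (F k).2) p, map_mul,
    Fin.range_cons, smul_smul, mul_comm, ← Set.range_comp]
  rfl

theorem IsDissectionAdditive.coneInvariant (he : IsDissectionAdditive (n + 1) l X e)
    (hX : X.Finite) (hdim : Module.finrank K V = n + 1) (hl : l ≠ 0) (h0 : h ≠ 0)
    (hXh : ∀ x ∈ X, h x ≠ 0) :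
    IsDissectionAdditive n (l ∘ₗ (LinearMap.ker h).subtype) ∅ (coneInvariant l h e) := by
  intro v i j q hlin hlv hij hq _ _ _
  have havoid : ∀ u : Fin n → LinearMap.ker h, ∀ᶠ p in genericSlice l,
      AvoidsFacets K X (Fin.cons p fun k => (u k : V) : Fin (n + 1) → V) := fun u => by
    refine eventually_avoidsFacets_cons hl hX hdim fun x hx hmem => hXh x hx ?_
    exact Submodule.span_le.2 (Set.range_subset_iff.2 fun k => (u k).2) hmem
  have hq' : (q : V) ∈ openSegment K (v i : V) (v j) := by
    obtain ⟨a, b, ha, hb, hab, rfl⟩ := hq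
    exact ⟨a, b, ha, hb, hab, rfl⟩
  have hcoe : ∀ (k : Fin n) (p : V), (Fin.cons p fun m => (update v k q m : V)) =
      update (Fin.cons p fun m => (v m : V) : Fin (n + 1) → V) k.succ q := fun k p => by
    rw [← Fin.cons_update]
    exact congrArg (fun u : Fin n → V => (Fin.cons p u : Fin (n + 1) → V))
      (comp_update Subtype.val v k q)
  have hrange : ∀ (u : Fin n → LinearMap.ker h) (p : V), insert p (Subtype.val '' Set.range u) =
      Set.range (Fin.cons p fun m => (u m : V) : Fin (n + 1) → V) := fun u p => by
    rw [Fin.range_cons, ← Set.range_comp]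
    rfl
  refine Germ.coe_eq.2 ?_
  filter_upwards [havoid v, havoid (update v i q), havoid (update v j q),
    eventually_genericSlice_apply hl,
    eventually_genericSlice_notMem hl (mt LinearMap.ker_eq_top.1 h0)] with p hv hi hj hlp hhp
  have hlin' : LinearIndependent K (Fin.cons p fun m => (v m : V) : Fin (n + 1) → V) := by
    refine linearIndependent_finCons.2
      ⟨hlin.map' (LinearMap.ker h).subtype (Submodule.ker_subtype _), fun hmem => hhp ?_⟩
    exact Submodule.span_le.2 (Set.range_subset_iff.2 fun k => (v k).2) hmem
  change _ • e _ = _ • e _ + _ • e _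
  rw [hcoe] at hi hj
  rw [hrange, hrange, hrange, hcoe, hcoe, ← smul_add,
    he hlin' (Fin.cases hlp hlv) (fun hs => hij (Fin.succ_injective n hs)) hq' hv hi hj]

theorem IsDissectionAdditive.eventually_signedValue_eq_sum
    (he : IsDissectionAdditive (n + 1) l X e) (ω : V [⋀^Fin (n + 1)]→ₗ[K] K) (hX : X.Finite)
    (hdim : Module.finrank K V = n + 1) {v : Fin (n + 1) → V} (hl : ∀ k, l (v k) = 1)
    (hv : AvoidsFacets K X v) :
    ∀ᶠ p in genericSlice l, signedValue ω e v =
      ∑ i : Fin (n + 1), (-1 : ℤ) ^ (i : ℕ) • signedValue ω e (Fin.cons p (i.removeNth v)) := by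
  have hl0 : l ≠ 0 := fun h => by simpa [h] using hl 0
  have hp : ∀ᶠ p in genericSlice l, ∀ i : Fin (n + 1),
      AvoidsFacets K X (Fin.cons p (i.removeNth v) : Fin (n + 1) → V) := by
    refine eventually_all.2 fun i => eventually_avoidsFacets_cons hl0 hX hdim ?_
    rw [range_removeNth]
    exact hv i
  filter_upwards [hp, eventually_genericSlice_apply hl0] with p hp hlp
  obtain ⟨c, hcw, k, hck⟩ := Fintype.not_linearIndependent_iff.1 fun hlin :
      LinearIndependent K (Fin.cons p v : Fin (n + 2) → V) => by
    have : FiniteDimensional K V := .of_finrank_pos (by rw [hdim]; exact n.succ_pos)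
    have := hlin.fintype_card_le_finrank
    rw [hdim, Fintype.card_fin] at this
    omega
  have hzero := he.boundaryValue_eq_zero ω (w := Fin.cons p v) (Fin.cases hlp hl)
    (avoidsRidges_cons hv hp) (fun h => hck (congrFun h k)) hcw
  rw [boundaryValue, Fin.sum_univ_succ] at hzero
  simp only [Fin.val_succ, pow_succ, Fin.val_zero, pow_zero, one_smul, mul_neg_one, neg_smul,
    Finset.sum_neg_distrib] at hzero
  have hsucc : ∀ i : Fin (n + 1), i.succ.removeNth (Fin.cons p v : Fin (n + 2) → V) =
      Fin.cons p (i.removeNth v) := Fin.cons_comp_succ_succAbove p v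
  simpa only [hsucc, Fin.removeNth_zero, Fin.tail_cons] using eq_of_sub_eq_zero
    ((sub_eq_add_neg _ _).trans hzero)

end ConeInvariant

section Vanishing

open Filter Function

variable {K : Type*} [Field K] [LinearOrder K] [IsStrictOrderedRing K]

theorem eventually_sum_zsmul_eq_zero {ι α A : Type*} [Fintype ι] [AddCommGroup A] {L : Filter α}
    {c : ι → ℤ} {f : ι → α → A} (h : ∑ i, c i • (f i : Germ L A) = 0) :
    ∀ᶠ p in L, ∑ i, c i • f i p = 0 := by
  have hsum : ((∑ i, c i • f i : α → A) : Germ L A) = ((0 : α → A) : Germ L A) :=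
    (map_sum (Germ.coeAddHom (M := A) L) (fun i => c i • f i) _).trans h
  filter_upwards [Germ.coe_eq.1 hsum] with p hp
  simpa using hp

variable {V A : Type*} [AddCommGroup V] [Module K V] [AddCommGroup A] {n : ℕ} {l : V →ₗ[K] K}
  {X : Set V} {e : Set V → A}

omit [LinearOrder K] [IsStrictOrderedRing K] in
theorem AvoidsFacets.coord_ne_zero {ι : Type*} {b : Module.Basis ι K V} (hb : AvoidsFacets K X b)
    (i : ι) {x : V} (hx : x ∈ X) : b.coord i x ≠ 0 := fun h0 => hb i x hx <| by
  refine b.mem_span_image.2 fun k hk hki => ?_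
  rw [Set.mem_singleton_iff.1 hki] at hk
  exact Finsupp.mem_support_iff.1 hk h0

theorem sum_signedValue_fin_zero {ι : Type*} [Fintype ι] (ω : V [⋀^Fin 0]→ₗ[K] K)
    (e : Set V → A) (a : ι → ℤ) (b : ι → Module.Basis (Fin 0) K V)
    (hab : ∀ᶠ x in generic K V, ∑ j, a j * signedIndicator ω (b j) x = 0) :
    ∑ j, a j • signedValue ω e (b j) = 0 := by
  obtain ⟨x, hx⟩ := hab.exists
  have hcone : ∀ j, x ∈ openCone K (b j) := fun j =>
    (mem_openCone_basis (b j)).2 fun i => i.elim0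
  have hsum : ∑ j, a j * intSign (ω (b j)) = 0 := by
    simpa only [signedIndicator, Set.indicator_of_mem (hcone _)] using hx
  simp only [signedValue, Set.range_eq_empty, smul_smul, ← Finset.sum_smul, hsum, zero_smul]

theorem eventually_sum_signedValue_cons_eq_zero {ι : Type*} [Fintype ι] {h : V →ₗ[K] K}
    (ω : V [⋀^Fin (n + 1)]→ₗ[K] K) (hdim : Module.finrank K V = n + 1) {y : V} (hy : h y = 1)
    {a : ι → ℤ} {F : ι → Fin n → LinearMap.ker h}
    (hF : ∑ q, a q • signedValue (hyperplaneForm ω h y) (coneInvariant l h e) (F q) = 0) :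
    ∀ᶠ p in genericSlice l,
      ∑ q, a q • signedValue ω e (Fin.cons p fun k => (F q k : V)) = 0 := by
  simp only [signedValue_coneInvariant ω hdim hy] at hF
  exact eventually_sum_zsmul_eq_zero hF

-- `V` and `A` share a universe because the induction replaces `A` by germs of maps `V → A`.
theorem sum_signedValue_eq_zero {V A : Type u} {ι : Type w} [AddCommGroup V] [Module K V]
    [AddCommGroup A] [Fintype ι] {n : ℕ} {l : V →ₗ[K] K} {X : Set V} {e : Set V → A}
    (he : IsDissectionAdditive n l X e) (hX : X.Finite) (ω : V [⋀^Fin n]→ₗ[K] K) (a : ι → ℤ)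
    (b : ι → Module.Basis (Fin n) K V) (hl : ∀ j k, l (b j k) = 1)
    (hb : ∀ j, AvoidsFacets K X (b j))
    (hab : ∀ᶠ x in generic K V, ∑ j, a j * signedIndicator ω (b j) x = 0) :
    ∑ j, a j • signedValue ω e (b j) = 0 := by
  classical
  let _ : TopologicalSpace K := Preorder.topology K
  have : OrderTopology K := ⟨rfl⟩
  induction n generalizing V A ι with
  | zero => exact sum_signedValue_fin_zero ω e a b hab
  | succ n ih =>
    rcases isEmpty_or_nonempty ι with hι | ⟨⟨j₀⟩⟩
    · exact Fintype.sum_empty _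
    have hdim : Module.finrank K V = n + 1 := Module.finrank_eq_card_basis (b j₀) |>.trans (by simp)
    have hl0 : l ≠ 0 := fun h => by simpa [h] using hl j₀ 0
    let H : ι × Fin (n + 1) → Submodule K V := fun q => LinearMap.ker ((b q.1).coord q.2)
    have hfacets : ∀ q₀, ∀ᶠ p in genericSlice l, ∑ q with H q = H q₀,
        (a q.1 * (-1) ^ (q.2 : ℕ)) • signedValue ω e (Fin.cons p (q.2.removeNth (b q.1))) = 0 := by
      rintro ⟨j₀, i₀⟩
      have hy : (b j₀).coord i₀ (b j₀ i₀) = 1 := by simp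
      have hvanish := ih (he.coneInvariant hX hdim hl0 (coord_ne_zero (b j₀) i₀)
          fun x => (hb j₀).coord_ne_zero i₀)
        Set.finite_empty (hyperplaneForm ω _ (b j₀ i₀)) _
        (fun q : {q // H q = H (j₀, i₀)} => facetBasis (b q.1.1) q.1.2 q.2)
        (fun q k => by simp [coe_facetBasis_apply, hl]) (fun _ _ _ hx => hx.elim)
        (eventually_sum_facets_eq_zero ω a b (hy.trans_ne one_ne_zero) hab)
      filter_upwards [eventually_sum_signedValue_cons_eq_zero ω hdim hy hvanish] with p hp
      simp only [coe_facetBasis_apply] at hp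
      rw [Finset.sum_subtype _ (p := fun q => H q = H (j₀, i₀)) (by simp)]
      exact hp
    have hcone := eventually_all.2 fun j =>
      he.eventually_signedValue_eq_sum ω hX hdim (hl j) (hb j)
    obtain ⟨p, hp, hpH⟩ := (hcone.and (eventually_all.2 hfacets)).exists
    calc ∑ j, a j • signedValue ω e (b j)
        = ∑ q : ι × Fin (n + 1), (a q.1 * (-1) ^ (q.2 : ℕ)) •
            signedValue ω e (Fin.cons p (q.2.removeNth (b q.1))) := by
          simp only [hp, Finset.smul_sum, smul_smul, Fintype.sum_prod_type]
      _ = 0 := Finset.sum_cancels_of_partition_cancels (Setoid.ker H) fun q _ => hpH q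

end Vanishing

section Homogenization

open Function

variable {K E ι : Type*} [Field K] [AddCommGroup E] [Module K E]

theorem linearIndependent_prodMk_one {p : ι → E} :
    LinearIndependent K (fun i => ((1 : K), p i)) ↔ AffineIndependent K p := by
  simp only [linearIndependent_iff', affineIndependent_iff, Prod.ext_iff, Prod.fst_sum,
    Prod.snd_sum, Prod.smul_mk, smul_eq_mul, mul_one, Prod.fst_zero, Prod.snd_zero, and_imp]

theorem linearIndependent_iff_notMem_span_prodMk_one {p : ι → E}
    (hp : AffineIndependent K p) :
    LinearIndependent K p ↔
      ((1 : K), (0 : E)) ∉ Submodule.span K (Set.range fun i => ((1 : K), p i)) := by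
  have hlin := linearIndependent_prodMk_one.2 hp
  have hker : LinearMap.ker (LinearMap.snd K K E) = K ∙ ((1 : K), (0 : E)) := by
    rw [LinearMap.ker_snd, LinearMap.range_eq_map, ← Ideal.span_singleton_one, Ideal.span,
      Submodule.map_span, Set.image_singleton, LinearMap.inl_apply]
  rw [← Submodule.disjoint_span_singleton' (by simp), ← hker]
  exact ⟨fun h => Submodule.range_ker_disjoint (f := LinearMap.snd K K E) h,
    fun h => (LinearMap.linearIndependent_iff_of_disjoint _ h).2 hlin⟩

theorem forall_linearIndependent_ne_iff_avoidsFacets {p : ι → E} (hp : AffineIndependent K p) :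
    (∀ k, LinearIndependent K fun j : {j // j ≠ k} => p j.1) ↔
      AvoidsFacets K {((1 : K), (0 : E))} fun i => ((1 : K), p i) := by
  refine forall_congr' fun k => ?_
  simp only [Set.mem_singleton_iff, forall_eq, Set.image_eq_range]
  exact linearIndependent_iff_notMem_span_prodMk_one (hp.comp_embedding (Embedding.subtype (· ≠ k)))

variable [Fintype ι] (b : AffineBasis ι K E)

/-- The basis `(1, b i)` of `K × E` attached to an affine basis `b` of `E`. -/
def homogenizedBasis : Module.Basis ι K (K × E) :=
  .mk (linearIndependent_prodMk_one.2 b.ind) fun z _ => by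
    have hmem : ∀ x : E, ((1 : K), x) ∈ Submodule.span K (Set.range fun i => ((1 : K), b i)) :=
      fun x => (Submodule.mem_span_range_iff_exists_fun K).2 ⟨fun i => b.coord i x, by
        simp [Prod.ext_iff, Prod.fst_sum, Prod.snd_sum]⟩
    have hz : z = ((1 : K), z.2) + (z.1 - 1) • ((1 : K), (0 : E)) := by simp
    rw [hz]
    exact add_mem (hmem _) (Submodule.smul_mem _ _ (hmem 0))

theorem coe_homogenizedBasis : ⇑(homogenizedBasis b) = fun i => ((1 : K), b i) :=
  Module.Basis.coe_mk _ _

theorem homogenizedBasis_coord_apply {z : K × E} (hz : z.1 ≠ 0) (i : ι) :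
    (homogenizedBasis b).coord i z = z.1 * b.coord i (z.1⁻¹ • z.2) := by
  have hsum : z = z.1 • ∑ j, b.coord j (z.1⁻¹ • z.2) • homogenizedBasis b j := by
    simp [Prod.ext_iff, coe_homogenizedBasis, Prod.fst_sum, Prod.snd_sum, hz]
  conv_lhs => rw [hsum, map_smul, Module.Basis.coord_apply, Module.Basis.repr_sum_self, smul_eq_mul]

theorem sum_homogenizedBasis_coord (z : K × E) : ∑ i, (homogenizedBasis b).coord i z = z.1 := by
  simpa [Prod.fst_sum, coe_homogenizedBasis] using
    congrArg Prod.fst ((homogenizedBasis b).sum_repr z)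

end Homogenization

section Dissection

open Function

section OrderedField

variable {K E ι : Type*} [Field K] [LinearOrder K] [IsStrictOrderedRing K] [AddCommGroup E]
  [Module K E] [DecidableEq ι] {p : ι → E} {i j : ι} {q : E}

omit [IsStrictOrderedRing K] in
theorem convexHull_range_update_subset (hq : q ∈ openSegment K (p i) (p j)) :
    convexHull K (Set.range (update p i q)) ⊆ convexHull K (Set.range p) := by
  refine convexHull_min ?_ (convex_convexHull K _)
  have hp : Set.range p ⊆ convexHull K (Set.range p) := subset_convexHull K _
  rintro _ ⟨k, rfl⟩
  by_cases hk : k = i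
  · rw [hk, update_self]
    exact (convex_convexHull K _).openSegment_subset (hp ⟨i, rfl⟩) (hp ⟨j, rfl⟩) hq
  · rw [update_of_ne hk]
    exact hp ⟨k, rfl⟩

variable [Fintype ι]

theorem sum_smul_mem_convexHull_range_update (hij : i ≠ j) {a b : K} (ha : 0 < a) (hab : a + b = 1)
    {w : ι → K} (hw : ∀ k, 0 ≤ w k) (hw1 : ∑ k, w k = 1) (hle : b * w i ≤ a * w j) :
    ∑ k, w k • p k ∈ convexHull K (Set.range (update p i (a • p i + b • p j))) := by
  set w' := update (update w j (w j - b * (w i / a))) i (w i / a) with hw'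
  have hwi' : w' i = w i / a := by simp [hw']
  have hwj' : w' j = w j - b * (w i / a) := by simp [hw', hij.symm]
  have hwk' : ∀ k ∈ ({i, j} : Finset ι)ᶜ, k ≠ i ∧ k ≠ j ∧ w' k = w k := fun k hk => by
    obtain ⟨hki, hkj⟩ : k ≠ i ∧ k ≠ j := by simpa using hk
    exact ⟨hki, hkj, by simp [hw', hki, hkj]⟩
  have hia : a * (w i / a) = w i := mul_div_cancel₀ _ ha.ne'
  have hsum : ∑ k, w k • p k = ∑ k, w' k • update p i (a • p i + b • p j) k := by
    rw [← Finset.sum_add_sum_compl {i, j}, ← Finset.sum_add_sum_compl {i, j} (fun k => w' k • _),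
      Finset.sum_pair hij, Finset.sum_pair hij]
    congr 1
    · rw [update_self, update_of_ne hij.symm, hwi', hwj', smul_add, smul_smul, smul_smul,
        mul_comm _ a, hia, add_assoc, ← add_smul]
      congr 2
      ring
    · refine Finset.sum_congr rfl fun k hk => ?_
      rw [(hwk' k hk).2.2, update_of_ne (hwk' k hk).1]
  have hsum1 : ∑ k, w' k = 1 := by
    rw [← hw1, ← Finset.sum_add_sum_compl {i, j}, ← Finset.sum_add_sum_compl {i, j} w,
      Finset.sum_pair hij, Finset.sum_pair hij, hwi', hwj',
      Finset.sum_congr rfl fun k hk => (hwk' k hk).2.2]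
    congr 1
    linear_combination hia - (w i / a) * hab
  rw [hsum]
  refine (convex_convexHull K _).sum_mem (fun k _ => ?_) hsum1
    fun k _ => subset_convexHull K _ ⟨k, rfl⟩
  by_cases hki : k = i
  · rw [hki, hwi']
    exact div_nonneg (hw i) ha.le
  by_cases hkj : k = j
  · rw [hkj, hwj', sub_nonneg, ← mul_div_assoc, div_le_iff₀ ha, mul_comm (w j)]
    exact hle
  · simpa [hw', hki, hkj] using hw k

omit [DecidableEq ι] in
theorem convexHull_range_eq_image_stdSimplex (p : ι → E) :
    convexHull K (Set.range p) = Fintype.linearCombination K p '' stdSimplex K ι := by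
  classical
  rw [← convexHull_rangle_single_eq_stdSimplex, LinearMap.image_convexHull, ← Set.range_comp]
  congr 2
  ext k
  simp [Fintype.linearCombination_apply_single]

omit [Fintype ι] in
theorem convexHull_range_eq_union [Finite ι] (hij : i ≠ j) (hq : q ∈ openSegment K (p i) (p j)) :
    convexHull K (Set.range p) =
      convexHull K (Set.range (update p i q)) ∪ convexHull K (Set.range (update p j q)) := by
  have := Fintype.ofFinite ι
  refine Set.Subset.antisymm (fun x hx => ?_) (Set.union_subset (convexHull_range_update_subset hq)
    (convexHull_range_update_subset (openSegment_symm K (p i) (p j) ▸ hq)))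
  obtain ⟨a, b, ha, hb, hab, rfl⟩ := hq
  rw [convexHull_range_eq_image_stdSimplex] at hx
  obtain ⟨w, ⟨hw, hw1⟩, rfl⟩ := hx
  rw [Fintype.linearCombination_apply]
  rcases le_total (b * w i) (a * w j) with hle | hle
  · exact .inl (sum_smul_mem_convexHull_range_update hij ha hab hw hw1 hle)
  · right
    rw [add_comm (a • p i)]
    exact sum_smul_mem_convexHull_range_update hij.symm hb (by rwa [add_comm]) hw hw1 hle

end OrderedField

variable {E ι : Type*} [NormedAddCommGroup E] [NormedSpace ℝ E] [FiniteDimensional ℝ E]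

theorem interior_setOf_affineMap_nonpos {f : E →ᵃ[ℝ] ℝ} (hf : f.linear ≠ 0) :
    interior {x | f x ≤ 0} = {x | f x < 0} := by
  have hopen : IsOpenMap f := AffineMap.isOpenMap_linear_iff.1
    (f.linear.isOpenMap_of_finiteDimensional (LinearMap.surjective hf))
  have := hopen.preimage_interior_eq_interior_preimage f.continuous_of_finiteDimensional (Set.Iic 0)
  rw [interior_Iic] at this
  exact this.symm

omit [FiniteDimensional ℝ E] in
theorem convexHull_range_update_subset_nonpos [DecidableEq ι] (b : AffineBasis ι ℝ E) {i j : ι}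
    (hij : i ≠ j) {r s : ℝ} (hr : 0 ≤ r) (hrs : r + s = 1) :
    convexHull ℝ (Set.range (update b i (r • b i + s • b j))) ⊆
      {x | (s • b.coord i - r • b.coord j) x ≤ 0} := by
  refine convexHull_min ?_ ((convex_Iic 0).affine_preimage (s • b.coord i - r • b.coord j))
  rintro _ ⟨k, rfl⟩
  by_cases hki : k = i
  · rw [hki, update_self]
    have hcoord (m : ι) :
        b.coord m (r • b i + s • b j) = r * b.coord m (b i) + s * b.coord m (b j) :=
      Convex.combo_affine_apply hrs
    simp [hcoord, hij, hij.symm, mul_comm r s]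
  · rw [update_of_ne hki]
    by_cases hkj : k = j
    · simp [hkj, hij, hr]
    · simp [b.coord_apply, Ne.symm hki, Ne.symm hkj]

theorem disjoint_interior_convexHull_range_update [DecidableEq ι] (b : AffineBasis ι ℝ E) {i j : ι}
    (hij : i ≠ j) {q : E} (hq : q ∈ openSegment ℝ (b i) (b j)) :
    Disjoint (interior (convexHull ℝ (Set.range (update b i q))))
      (interior (convexHull ℝ (Set.range (update b j q)))) := by
  obtain ⟨r, s, hr, hs, hrs, rfl⟩ := hq
  set f : E →ᵃ[ℝ] ℝ := s • b.coord i - r • b.coord j with hf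
  have hf0 : f.linear ≠ 0 := fun h => by
    have hconst : f (b i) = f (b j) := by
      rw [← sub_eq_zero, ← vsub_eq_sub, ← f.linearMap_vsub, h, LinearMap.zero_apply]
    simp [hf, hij, hij.symm] at hconst
    linarith
  have hle := interior_mono (convexHull_range_update_subset_nonpos b hij hr.le hrs)
  have hge := interior_mono
    (convexHull_range_update_subset_nonpos b hij.symm hs.le ((add_comm s r).trans hrs))
  rw [← hf, interior_setOf_affineMap_nonpos hf0] at hle
  rw [← neg_sub (s • b.coord i), ← hf, interior_setOf_affineMap_nonpos (by simpa using hf0),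
    add_comm (s • b j)] at hge
  exact Set.disjoint_left.2 fun x hx hx' =>
    lt_asymm (hle hx) (Left.neg_neg_iff.1 (show -f x < 0 from hge hx'))

omit [FiniteDimensional ℝ E] in
theorem notMem_frontier_convexHull [Finite ι] (b : AffineBasis ι ℝ E) {x : E}
    (hx : ∀ i, b.coord i x ≠ 0) : x ∉ frontier (convexHull ℝ (Set.range b)) := by
  rw [((Set.finite_range b).isCompact_convexHull ℝ).isClosed.frontier_eq, b.interior_convexHull,
    b.convexHull_eq_nonneg_coord]
  exact fun h => h.2 fun i => (h.1 i).lt_of_ne' (hx i)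

end Dissection

section Measure

open Filter Topology

theorem sum_indicator_interior_eq_zero {X ι : Type*} [TopologicalSpace X] [MeasurableSpace X]
    [OpensMeasurableSpace X] [Fintype ι] {μ : Measure X} [IsLocallyFiniteMeasure μ]
    [μ.IsOpenPosMeasure] {S : ι → Set X} {c : ι → ℝ}
    (h : ∀ t, MeasurableSet t → ∑ i, c i * μ.real (S i ∩ t) = 0) {x : X}
    (hx : ∀ i, x ∉ frontier (S i)) : ∑ i, (interior (S i)).indicator (fun _ => c i) x = 0 := by
  have hloc (i : ι) : ∀ᶠ y in 𝓝 x, y ∈ S i ↔ x ∈ interior (S i) := by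
    by_cases hi : x ∈ interior (S i)
    · filter_upwards [mem_interior_iff_mem_nhds.1 hi] with y hy using iff_of_true hy hi
    · have hcl : x ∉ closure (S i) := fun hcl => hx i ⟨hcl, hi⟩
      filter_upwards [isClosed_closure.isOpen_compl.mem_nhds hcl] with y hy using
        iff_of_false (fun hyS => hy (subset_closure hyS)) hi
  obtain ⟨s, hs, hsfin⟩ := μ.finiteAt_nhds x
  obtain ⟨t, ht, hto, hxt⟩ := eventually_nhds_iff.1 ((eventually_all.2 hloc).and hs)
  have htpos : μ.real t ≠ 0 := (ENNReal.toReal_pos (hto.measure_pos μ ⟨x, hxt⟩).ne'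
    ((measure_mono fun y hy => (ht y hy).2).trans_lt hsfin).ne).ne'
  have hterm (i : ι) :
      c i * μ.real (S i ∩ t) = (interior (S i)).indicator (fun _ => c i) x * μ.real t := by
    by_cases hi : x ∈ interior (S i)
    · rw [Set.indicator_of_mem hi, Set.inter_eq_right.2 fun y hy => ((ht y hy).1 i).2 hi]
    · have hempty : S i ∩ t = ∅ :=
        Set.eq_empty_of_forall_notMem fun y hy => hi (((ht y hy.2).1 i).1 hy.1)
      rw [Set.indicator_of_notMem hi, hempty, measureReal_empty, mul_zero, zero_mul]
  have hsum := h t hto.measurableSet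
  rw [Finset.sum_congr rfl fun i _ => hterm i, ← Finset.sum_mul] at hsum
  exact (mul_eq_zero.1 hsum).resolve_right htpos

variable {E κ : Type*} [NormedAddCommGroup E] [NormedSpace ℝ E] [Fintype κ]

theorem mem_openCone_homogenizedBasis_iff (b : AffineBasis κ ℝ E) {z : ℝ × E} :
    z ∈ openCone ℝ (homogenizedBasis b) ↔
      0 < z.1 ∧ z.1⁻¹ • z.2 ∈ interior (convexHull ℝ (Set.range b)) := by
  have := b.nonempty
  rw [mem_openCone_basis, b.interior_convexHull]
  have hcoord (hz : 0 < z.1) (i : κ) :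
      0 < (homogenizedBasis b).coord i z ↔ 0 < b.coord i (z.1⁻¹ • z.2) := by
    rw [homogenizedBasis_coord_apply b hz.ne', mul_pos_iff_of_pos_left hz]
  refine ⟨fun h => ?_, fun ⟨hz, h⟩ i => (hcoord hz i).2 (h i)⟩
  have hz : 0 < z.1 := by
    rw [← sum_homogenizedBasis_coord b]
    exact Finset.sum_pos (fun i _ => h i) Finset.univ_nonempty
  exact ⟨hz, fun i => (hcoord hz i).1 (h i)⟩

variable {ι : Type*} [Fintype ι] [MeasurableSpace E] [OpensMeasurableSpace E]

theorem eventually_sum_signedIndicator_eq_zero {μ : Measure E} [IsLocallyFiniteMeasure μ]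
    [μ.IsOpenPosMeasure] (ω : (ℝ × E) [⋀^κ]→ₗ[ℝ] ℝ) {b : ι → AffineBasis κ ℝ E} {c : ι → ℤ}
    (hω : ∀ i, ω (homogenizedBasis (b i)) ≠ 0)
    (h : ∀ t, MeasurableSet t →
      ∑ i, (c i : ℝ) * μ.real (convexHull ℝ (Set.range (b i)) ∩ t) = 0) :
    ∀ᶠ z in generic ℝ (ℝ × E),
      ∑ i, c i * intSign (ω (homogenizedBasis (b i))) *
        signedIndicator ω (homogenizedBasis (b i)) z = 0 := by
  have hfst : LinearMap.fst ℝ ℝ E ≠ 0 := fun h0 =>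
    one_ne_zero (LinearMap.congr_fun h0 ((1 : ℝ), (0 : E)))
  filter_upwards [eventually_generic_ne_zero hfst, Filter.eventually_all.2 fun i =>
    Filter.eventually_all.2 fun k =>
      eventually_generic_ne_zero (coord_ne_zero (homogenizedBasis (b i)) k)] with z hz0 hz
  set x := z.1⁻¹ • z.2
  have hterm (i : ι) : c i * intSign (ω (homogenizedBasis (b i))) *
      signedIndicator ω (homogenizedBasis (b i)) z =
        (openCone ℝ (homogenizedBasis (b i))).indicator (fun _ => c i) z := by
    by_cases hmem : z ∈ openCone ℝ (homogenizedBasis (b i))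
    · rw [signedIndicator, Set.indicator_of_mem hmem, Set.indicator_of_mem hmem, mul_assoc,
        intSign_mul_self (hω i), mul_one]
    · rw [signedIndicator, Set.indicator_of_notMem hmem, Set.indicator_of_notMem hmem, mul_zero]
  rw [Finset.sum_congr rfl fun i _ => hterm i]
  by_cases hpos : 0 < z.1
  · have hfr (i : ι) : x ∉ frontier (convexHull ℝ (Set.range (b i))) :=
      notMem_frontier_convexHull (b i) fun k => by
        have := hz i k
        rw [homogenizedBasis_coord_apply _ hz0] at this
        exact right_ne_zero_of_mul this
    have hsum := sum_indicator_interior_eq_zero h hfr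
    rw [← Int.cast_inj (α := ℝ), Int.cast_sum, Int.cast_zero, ← hsum]
    refine Finset.sum_congr rfl fun i _ => ?_
    have hiff : z ∈ openCone ℝ (homogenizedBasis (b i)) ↔
        x ∈ interior (convexHull ℝ (Set.range (b i))) := by
      rw [mem_openCone_homogenizedBasis_iff, and_iff_right hpos]
    by_cases hmem : x ∈ interior (convexHull ℝ (Set.range (b i)))
    · rw [Set.indicator_of_mem hmem, Set.indicator_of_mem (hiff.2 hmem)]
    · rw [Set.indicator_of_notMem hmem, Set.indicator_of_notMem (mt hiff.1 hmem), Int.cast_zero]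
  · refine Finset.sum_eq_zero fun i _ => Set.indicator_of_notMem (fun hmem => hpos ?_) _
    exact ((mem_openCone_homogenizedBasis_iff (b i)).1 hmem).1

end Measure

section Simplices

open Function

theorem linearIndependent_update_of_mem_openSegment {K V ι : Type*} [Field K] [LinearOrder K]
    [AddCommGroup V] [Module K V] [DecidableEq ι] {v : ι → V}
    (hv : LinearIndependent K v) {i j : ι} (hij : i ≠ j) {q : V}
    (hq : q ∈ openSegment K (v i) (v j)) : LinearIndependent K (update v i q) := by
  obtain ⟨r, s, hr, -, -, rfl⟩ := hq
  refine hv.update i _ ⟨1, one_mem _, Finsupp.single i r + Finsupp.single j s, ?_, ?_⟩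
  · simpa [hij] using hr.ne'
  · simp

variable {d : ℕ}

local notation "𝔼" => EuclideanSpace ℝ (Fin d)

theorem exists_affineBasis_coe_eq {p : Fin (d + 1) → 𝔼} (hp : AffineIndependent ℝ p) :
    ∃ b : AffineBasis (Fin (d + 1)) ℝ 𝔼, ⇑b = p :=
  ⟨⟨p, hp, hp.affineSpan_eq_top_iff_card_eq_finrank_add_one.2 (by simp)⟩, rfl⟩

theorem NCSimplex.exists_affineBasis (Δ : NCSimplex d) :
    ∃ b : AffineBasis (Fin (d + 1)) ℝ 𝔼,
      AvoidsFacets ℝ {((1 : ℝ), (0 : 𝔼))} (fun i => ((1 : ℝ), b i)) ∧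
        Δ.1 = convexHull ℝ (Set.range b) := by
  obtain ⟨p, hp, hcod, hΔ⟩ := Δ.2
  obtain ⟨b, rfl⟩ := exists_affineBasis_coe_eq hp
  exact ⟨b, (forall_linearIndependent_ne_iff_avoidsFacets hp).1 hcod, hΔ⟩

theorem NCSimplex.exists_eq_convexHull_range {p : Fin (d + 1) → 𝔼} (hp : AffineIndependent ℝ p)
    (hX : AvoidsFacets ℝ {((1 : ℝ), (0 : 𝔼))} fun i => ((1 : ℝ), p i)) :
    ∃ Δ : NCSimplex d, Δ.1 = convexHull ℝ (Set.range p) :=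
  ⟨⟨_, p, hp, (forall_linearIndependent_ne_iff_avoidsFacets hp).2 hX, rfl⟩, rfl⟩

theorem NCSimplex.isCompact (Δ : NCSimplex d) : IsCompact Δ.1 := by
  obtain ⟨b, -, hΔ⟩ := Δ.exists_affineBasis
  exact hΔ ▸ (Set.finite_range b).isCompact_convexHull ℝ

theorem NCSimplex.convex (Δ : NCSimplex d) : Convex ℝ Δ.1 := by
  obtain ⟨b, -, hΔ⟩ := Δ.exists_affineBasis
  exact hΔ ▸ convex_convexHull ℝ _

variable (d) in
/-- The elements `(Δ) - (Δ₁) - (Δ₂)` of the free abelian group, for all dissections of a simplex `Δ`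
into two simplices `Δ₁`, `Δ₂`. -/
def dissectionRelators : Set (FreeAbelianGroup (NCSimplex d)) :=
  {x | ∃ Δ Δ₁ Δ₂ : NCSimplex d, Δ.1 = Δ₁.1 ∪ Δ₂.1 ∧ Disjoint (interior Δ₁.1) (interior Δ₂.1) ∧
    x = FreeAbelianGroup.of Δ - FreeAbelianGroup.of Δ₁ - FreeAbelianGroup.of Δ₂}

variable (d) in
/-- The group of simplices modulo elementary dissections. -/
abbrev DissectionGroup : Type :=
  FreeAbelianGroup (NCSimplex d) ⧸ AddSubgroup.closure (dissectionRelators d)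

/-- The class of a simplex modulo elementary dissections. -/
def NCSimplex.dissectionClass (Δ : NCSimplex d) : DissectionGroup d :=
  QuotientAddGroup.mk (FreeAbelianGroup.of Δ)

theorem NCSimplex.dissectionClass_eq_add {Δ Δ₁ Δ₂ : NCSimplex d} (hunion : Δ.1 = Δ₁.1 ∪ Δ₂.1)
    (hdisj : Disjoint (interior Δ₁.1) (interior Δ₂.1)) :
    Δ.dissectionClass = Δ₁.dissectionClass + Δ₂.dissectionClass := by
  rw [← sub_eq_zero, ← sub_sub]
  exact (QuotientAddGroup.eq_zero_iff _).2
    (AddSubgroup.subset_closure ⟨Δ, Δ₁, Δ₂, hunion, hdisj, rfl⟩)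

/-- The class, modulo elementary dissections, of the simplex whose homogenised vertices `(1, p)`
form the set `T`; it is zero if there is no such non-codegenerate simplex. -/
def homogenizedClass (T : Set (ℝ × 𝔼)) : DissectionGroup d :=
  extend Subtype.val NCSimplex.dissectionClass 0 (convexHull ℝ (Prod.snd '' T))

theorem homogenizedClass_range {Δ : NCSimplex d} {p : Fin (d + 1) → 𝔼}
    (hΔ : Δ.1 = convexHull ℝ (Set.range p)) :
    homogenizedClass (Set.range fun i => ((1 : ℝ), p i)) = Δ.dissectionClass := by
  rw [homogenizedClass, ← Set.range_comp]
  exact (congrArg _ hΔ.symm).trans (Subtype.val_injective.extend_apply _ _ Δ)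

theorem isDissectionAdditive_homogenizedClass :
    IsDissectionAdditive (d + 1) (LinearMap.fst ℝ ℝ 𝔼) {((1 : ℝ), (0 : 𝔼))} homogenizedClass := by
  intro v i j q hv hl hij hq hX hXi hXj
  have hvi := linearIndependent_update_of_mem_openSegment hv hij hq
  have hvj := linearIndependent_update_of_mem_openSegment hv hij.symm
    (openSegment_symm ℝ (v i) (v j) ▸ hq)
  obtain ⟨p, rfl⟩ : ∃ p : Fin (d + 1) → 𝔼, v = fun k => ((1 : ℝ), p k) :=
    ⟨fun k => (v k).2, funext fun k => Prod.ext (hl k) rfl⟩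
  obtain ⟨x, hx, rfl⟩ : ∃ x ∈ openSegment ℝ (p i) (p j), q = ((1 : ℝ), x) := by
    obtain ⟨r, s, hr, hs, hrs, rfl⟩ := hq
    exact ⟨r • p i + s • p j, ⟨r, s, hr, hs, hrs, rfl⟩, by simp [hrs]⟩
  have hupdate (k : Fin (d + 1)) : update (fun m => ((1 : ℝ), p m)) k ((1 : ℝ), x) =
      fun m => ((1 : ℝ), update p k x m) := (comp_update (Prod.mk (1 : ℝ)) p k x).symm
  rw [hupdate] at hvi hvj hXi hXj
  rw [linearIndependent_prodMk_one] at hv hvi hvj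
  obtain ⟨Δ, hΔ⟩ := NCSimplex.exists_eq_convexHull_range hv hX
  obtain ⟨Δ₁, hΔ₁⟩ := NCSimplex.exists_eq_convexHull_range hvi hXi
  obtain ⟨Δ₂, hΔ₂⟩ := NCSimplex.exists_eq_convexHull_range hvj hXj
  obtain ⟨b, rfl⟩ := exists_affineBasis_coe_eq hv
  rw [hupdate, hupdate, homogenizedClass_range hΔ, homogenizedClass_range hΔ₁,
    homogenizedClass_range hΔ₂]
  refine NCSimplex.dissectionClass_eq_add ?_ ?_
  · rw [hΔ, hΔ₁, hΔ₂, convexHull_range_eq_union hij hx]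
  · rw [hΔ₁, hΔ₂]
    exact disjoint_interior_convexHull_range_update b hij hx

theorem sum_coeff_smul_dissectionClass (x : FreeAbelianGroup (NCSimplex d)) :
    ∑ Δ : x.support, FreeAbelianGroup.coeff Δ.1 x • Δ.1.dissectionClass =
      (x : DissectionGroup d) := by
  conv_rhs => rw [x.eq_sum_support_coeff_smul_of]
  rw [Finset.sum_coe_sort x.support fun Δ => FreeAbelianGroup.coeff Δ x • Δ.dissectionClass]
  exact (map_sum (QuotientAddGroup.mk' (AddSubgroup.closure (dissectionRelators d))) _ _).symm

theorem sum_coeff_mul_measureReal {x : FreeAbelianGroup (NCSimplex d)} (t : Set 𝔼)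
    (ht : MeasurableSet t) :
    ∑ Δ : x.support, (FreeAbelianGroup.coeff Δ.1 x : ℝ) * volume.real (Δ.1.1 ∩ t) =
      FreeAbelianGroup.lift simplexMeasure x ⟨t, ht⟩ := by
  conv_rhs => rw [x.eq_sum_support_coeff_smul_of]
  rw [Finset.sum_coe_sort x.support fun Δ =>
    (FreeAbelianGroup.coeff Δ x : ℝ) * volume.real (Δ.1 ∩ t)]
  simp [simplexMeasure, measureReal_def]

theorem ker_lift_simplexMeasure_le :
    (FreeAbelianGroup.lift (simplexMeasure (d := d))).ker ≤
      AddSubgroup.closure (dissectionRelators d) := by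
  intro x hx
  choose b hb hbΔ using fun Δ : NCSimplex d => Δ.exists_affineBasis
  obtain ⟨ω, hω⟩ : ∃ ω : (ℝ × 𝔼) [⋀^Fin (d + 1)]→ₗ[ℝ] ℝ, ω ≠ 0 :=
    ⟨_, (Module.finBasisOfFinrankEq ℝ (ℝ × 𝔼) (by simp [add_comm])).det_ne_zero⟩
  have hωb (Δ : x.support) : ω (homogenizedBasis (b Δ.1)) ≠ 0 :=
    (AlternatingMap.map_basis_ne_zero_iff _ _).2 hω
  have hmeasure (t : Set 𝔼) (ht : MeasurableSet t) :
      ∑ Δ : x.support, (FreeAbelianGroup.coeff Δ.1 x : ℝ) *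
        volume.real (convexHull ℝ (Set.range (b Δ.1)) ∩ t) = 0 := by
    simp only [← hbΔ, sum_coeff_mul_measureReal t ht, (AddMonoidHom.mem_ker).1 hx, Pi.zero_apply]
  have hzero := sum_signedValue_eq_zero isDissectionAdditive_homogenizedClass
    (Set.finite_singleton _) ω _ (fun Δ : x.support => homogenizedBasis (b Δ.1))
    (fun Δ k => by rw [coe_homogenizedBasis, LinearMap.fst_apply])
    (fun Δ => coe_homogenizedBasis (b Δ.1) ▸ hb Δ.1)
    (eventually_sum_signedIndicator_eq_zero ω hωb hmeasure)
  rw [← QuotientAddGroup.eq_zero_iff, ← sum_coeff_smul_dissectionClass, ← hzero]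
  refine Finset.sum_congr rfl fun Δ _ => ?_
  rw [signedValue, smul_smul, mul_assoc, intSign_mul_self (hωb Δ), mul_one, coe_homogenizedBasis,
    homogenizedClass_range (hbΔ Δ.1)]

theorem aedisjoint_of_disjoint_interior {E : Type*} [NormedAddCommGroup E] [NormedSpace ℝ E]
    [FiniteDimensional ℝ E] [MeasurableSpace E] [BorelSpace E] (μ : Measure E) [μ.IsAddHaarMeasure]
    {s t : Set E} (hs : Convex ℝ s) (ht : Convex ℝ t) (hst : Disjoint (interior s) (interior t)) :
    AEDisjoint μ s t :=
  hst.aedisjoint.congr (interior_ae_eq_of_null_frontier (hs.addHaar_frontier μ)).symm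
    (interior_ae_eq_of_null_frontier (ht.addHaar_frontier μ)).symm

theorem closure_dissectionRelators_le :
    AddSubgroup.closure (dissectionRelators d) ≤
      (FreeAbelianGroup.lift (simplexMeasure (d := d))).ker := by
  rw [AddSubgroup.closure_le]
  rintro _ ⟨Δ, Δ₁, Δ₂, hunion, hdisj, rfl⟩
  rw [SetLike.mem_coe, AddMonoidHom.mem_ker, map_sub, map_sub, sub_sub, sub_eq_zero]
  simp only [FreeAbelianGroup.lift_apply_of]
  ext s
  have hne (Δ : NCSimplex d) : volume (Δ.1 ∩ s.1) ≠ ⊤ :=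
    measure_ne_top_of_subset Set.inter_subset_left Δ.isCompact.measure_ne_top
  have hae := aedisjoint_of_disjoint_interior volume Δ₁.convex Δ₂.convex hdisj
  change volume.real (Δ.1 ∩ s) = volume.real (Δ₁.1 ∩ s) + volume.real (Δ₂.1 ∩ s)
  rw [hunion, Set.union_inter_distrib_right, measureReal_union₀
    (Δ₂.isCompact.measurableSet.inter s.2).nullMeasurableSet
    (hae.mono Set.inter_subset_left Set.inter_subset_left) (hne Δ₁) (hne Δ₂)]

end Simplices

/-- the kernel of the homomorphism `π` from the free abelian group on
non-codegenerate `d`-simplices to signed measures, sending a generator `Δ` to `[Δ]`, is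
generated by the relators `(Δ) − (Δ₁) − (Δ₂)` where `Δ` is tiled by the two simplices
`Δ₁` and `Δ₂`. -/
theorem kernel_generated_by_elementary_dissections (d : ℕ) :
    (FreeAbelianGroup.lift (simplexMeasure (d := d))).ker =
      AddSubgroup.closure
        {x : FreeAbelianGroup (NCSimplex d) |
          ∃ Δ Δ₁ Δ₂ : NCSimplex d,
            Δ.1 = Δ₁.1 ∪ Δ₂.1 ∧
            Disjoint (interior Δ₁.1) (interior Δ₂.1) ∧
            x = FreeAbelianGroup.of Δ - FreeAbelianGroup.of Δ₁ - FreeAbelianGroup.of Δ₂} :=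
  le_antisymm ker_lift_simplexMeasure_le closure_dissectionRelators_le
end
end

section
/- Let Δ_1, …, Δ_n be d-simplices in ℝ^d. Then there exists a finite family T of d-simplices with pairwise disjoint interiors whose union is Δ_1 ∪ ⋯ ∪ Δ_n, which refines each Δ_i: for each i, the members of T contained in Δ_i have union Δ_i (so they tile Δ_i). -/
noncomputable section

/-!
Enclose all the given simplices in one large simplex, and cut it successively along the hyperplanes
spanned by the facets of the given ones. A simplex is cut along a hyperplane `f = 0` by choosing an
edge on whose endpoints `f` has opposite signs and bisecting the simplex through the zero of `f` on
that edge: both halves have fewer vertices off the hyperplane, so repeating this terminates. In the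
resulting tiling every barycentric coordinate of every given simplex has constant sign on every
tile, so a tile either lies in a given simplex or misses its interior; hence the tiles lying in a
given simplex cover its interior, and being closed they cover the simplex.
-/

open Set Function
open scoped Pointwise Topology

section ConvexHull

variable {𝕜 E : Type*} [Field 𝕜] [LinearOrder 𝕜] [IsStrictOrderedRing 𝕜] [AddCommGroup E]
  [Module 𝕜 E] {a b p : E}

theorem segment_union_segment (hp : p ∈ segment 𝕜 a b) :
    segment 𝕜 a p ∪ segment 𝕜 p b = segment 𝕜 a b := by
  rw [segment_eq_image_lineMap] at hp
  obtain ⟨t, ⟨ht₀, ht₁⟩, rfl⟩ := hp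
  have image_Icc {r s : 𝕜} (hrs : r ≤ s) : AffineMap.lineMap a b '' Icc r s =
      segment 𝕜 (AffineMap.lineMap a b r) (AffineMap.lineMap a b s) := by
    rw [← segment_eq_Icc hrs, image_segment]
  rw [segment_eq_image_lineMap 𝕜 a b, ← Icc_union_Icc_eq_Icc ht₀ ht₁, image_union, image_Icc ht₀,
    image_Icc ht₁, AffineMap.lineMap_apply_zero, AffineMap.lineMap_apply_one]

theorem convexHull_pair_union_eq_union (hp : p ∈ segment 𝕜 a b) (s : Set E) :
    convexHull 𝕜 ({a, b} ∪ s) = convexHull 𝕜 ({a, p} ∪ s) ∪ convexHull 𝕜 ({p, b} ∪ s) := by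
  rcases s.eq_empty_or_nonempty with rfl | hs
  · simp only [union_empty, convexHull_pair, segment_union_segment hp]
  · simp only [convexHull_union (insert_nonempty _ _) hs, convexHull_pair,
      ← convexJoin_union_left, segment_union_segment hp]

theorem convexHull_range_eq_union_update {ι : Type*} [DecidableEq ι] (v : ι → E) {i j : ι}
    (hij : i ≠ j) (hp : p ∈ segment 𝕜 (v i) (v j)) :
    convexHull 𝕜 (range v) =
      convexHull 𝕜 (range (update v i p)) ∪ convexHull 𝕜 (range (update v j p)) := by
  have range_eq (u : ι → E) : range u = {u i, u j} ∪ u '' {i, j}ᶜ := by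
    rw [← image_pair, ← image_union, union_compl_self, image_univ]
  have image_update {l : ι} (hl : l ∈ ({i, j} : Set ι)) :
      update v l p '' {i, j}ᶜ = v '' {i, j}ᶜ :=
    image_congr fun m hm ↦ update_of_ne (fun h : m = l ↦ hm (h ▸ hl)) p v
  rw [range_eq v, range_eq (update v i p), range_eq (update v j p), image_update (by simp),
    image_update (by simp), update_self, update_self, update_of_ne hij, update_of_ne hij.symm,
    convexHull_pair_union_eq_union hp, union_comm]

end ConvexHull

section AffineBasis

section ReplaceVertex

variable {ι k V P : Type*} [DivisionRing k] [AddCommGroup V] [Module k V] [AddTorsor V P]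

theorem coord_eq_zero_of_mem_affineSpan_image_compl (b : AffineBasis ι k P) {i : ι} {p : P}
    (hp : p ∈ affineSpan k (b '' {i}ᶜ)) : b.coord i p = 0 := by
  have h : EqOn (b.coord i) (AffineMap.const k P (0 : k)) (b '' {i}ᶜ) := by
    rintro _ ⟨j, hj, rfl⟩
    exact b.coord_apply_ne (Ne.symm hj)
  exact AffineMap.eqOn_affineSpan h hp

theorem affineIndependent_update [DecidableEq ι] (b : AffineBasis ι k P) {i : ι} {p : P}
    (hp : b.coord i p ≠ 0) : AffineIndependent k (update b i p) := by
  refine AffineIndependent.affineIndependent_of_notMem_span (i := i) ?_ ?_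
  · convert b.ind.comp_embedding (Embedding.subtype (· ≠ i)) using 2 with j
    exact update_of_ne j.2 p b
  · have himage : update b i p '' {j | j ≠ i} = b '' {i}ᶜ :=
      image_congr fun j hj ↦ update_of_ne hj p b
    rw [update_self, himage]
    exact fun h ↦ hp (coord_eq_zero_of_mem_affineSpan_image_compl b h)

variable [Finite ι] [DecidableEq ι]

/-- The affine basis obtained from `b` by replacing its `i`-th point with `p`. In terms of
simplices, it moves one vertex and keeps the opposite facet; `hp` says that `p` is not in the
hyperplane spanned by that facet. -/
def replaceVertex (b : AffineBasis ι k P) (i : ι) (p : P) (hp : b.coord i p ≠ 0) :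
    AffineBasis ι k P where
  toFun := update b i p
  ind' := affineIndependent_update b hp
  tot' := by
    have := Fintype.ofFinite ι
    have := b.finiteDimensional
    rw [(affineIndependent_update b hp).affineSpan_eq_top_iff_card_eq_finrank_add_one]
    exact b.card_eq_finrank_add_one

theorem coe_replaceVertex (b : AffineBasis ι k P) {i : ι} {p : P} (hp : b.coord i p ≠ 0) :
    ⇑(replaceVertex b i p hp) = update b i p :=
  rfl

theorem replaceVertex_self (b : AffineBasis ι k P) {i : ι} {p : P} (hp : b.coord i p ≠ 0) :
    replaceVertex b i p hp i = p := by
  rw [coe_replaceVertex, update_self]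

theorem replaceVertex_of_ne (b : AffineBasis ι k P) {i j : ι} {p : P} (hp : b.coord i p ≠ 0)
    (hji : j ≠ i) : replaceVertex b i p hp j = b j := by
  rw [coe_replaceVertex, update_of_ne hji]

theorem coord_replaceVertex_self (b : AffineBasis ι k P) {i j : ι} {p : P}
    (hp : b.coord i p ≠ 0) (hij : i ≠ j) : (replaceVertex b i p hp).coord j p = 0 := by
  simpa only [replaceVertex_self] using (replaceVertex b i p hp).coord_apply_ne hij.symm

theorem support_comp_replaceVertex {F : Type*} [Zero F] (f : P → F) (b : AffineBasis ι k P) {i : ι}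
    {p : P} (hp : b.coord i p ≠ 0) (hfp : f p = 0) :
    support (f ∘ replaceVertex b i p hp) = support (f ∘ b) \ {i} := by
  rw [coe_replaceVertex, comp_update, hfp, support_update_zero]

end ReplaceVertex

section OpenSegment

variable {ι 𝕜 E : Type*} [Field 𝕜] [LinearOrder 𝕜] [IsStrictOrderedRing 𝕜] [AddCommGroup E]
  [Module 𝕜 E] (b : AffineBasis ι 𝕜 E) {i j : ι} {p : E}

theorem coord_left_pos_of_mem_openSegment (hij : i ≠ j) (hp : p ∈ openSegment 𝕜 (b i) (b j)) :
    0 < b.coord i p := by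
  have h : b.coord i p ∈ openSegment 𝕜 (b.coord i (b i)) (b.coord i (b j)) := by
    rw [← image_openSegment]
    exact mem_image_of_mem _ hp
  rw [b.coord_apply_eq, b.coord_apply_ne hij, openSegment_symm, openSegment_eq_Ioo zero_lt_one] at h
  exact h.1

theorem coord_right_pos_of_mem_openSegment (hij : i ≠ j) (hp : p ∈ openSegment 𝕜 (b i) (b j)) :
    0 < b.coord j p :=
  coord_left_pos_of_mem_openSegment b hij.symm (openSegment_symm 𝕜 (b i) (b j) ▸ hp)

theorem coord_replaceVertex_neg_of_mem_openSegment [Finite ι] [DecidableEq ι] (hij : i ≠ j)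
    (hp : p ∈ openSegment 𝕜 (b i) (b j)) :
    (replaceVertex b i p (coord_left_pos_of_mem_openSegment b hij hp).ne').coord j (b i) < 0 := by
  have hip := (coord_left_pos_of_mem_openSegment b hij hp).ne'
  set c := replaceVertex b i p hip
  have hcj : c.coord j (b j) = 1 := by
    rw [← replaceVertex_of_ne b hip hij.symm, c.coord_apply_eq]
  have h : c.coord j p ∈ openSegment 𝕜 (c.coord j (b i)) (c.coord j (b j)) := by
    rw [← image_openSegment]
    exact mem_image_of_mem _ hp
  rw [coord_replaceVertex_self b _ hij, hcj] at h
  obtain ⟨r, s, hr, hs, -, hrs⟩ := h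
  simp only [smul_eq_mul, mul_one] at hrs
  exact neg_of_mul_neg_right (hrs ▸ lt_add_of_pos_right _ hs) hr.le

end OpenSegment

end AffineBasis

section Topology

theorem subset_of_isClosed_of_interior_subset {E : Type*} [AddCommGroup E] [Module ℝ E]
    [TopologicalSpace E] [IsTopologicalAddGroup E] [ContinuousSMul ℝ E] {s t : Set E}
    (hs : Convex ℝ s) (hne : (interior s).Nonempty) (ht : IsClosed t) (hst : interior s ⊆ t) :
    s ⊆ t :=
  calc s
    _ ⊆ closure s := subset_closure
    _ = closure (interior s) := (hs.closure_interior_eq_closure_of_nonempty_interior hne).symm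
    _ ⊆ t := closure_minimal hst ht

variable {E : Type*} [NormedAddCommGroup E] [NormedSpace ℝ E]

theorem disjoint_interior_of_nonneg_of_nonpos {g : E →ᵃ[ℝ] ℝ} (hg : g ≠ 0) {s t : Set E}
    (hs : ∀ x ∈ s, 0 ≤ g x) (ht : ∀ x ∈ t, g x ≤ 0) : Disjoint (interior s) (interior t) := by
  rw [disjoint_iff_inter_eq_empty]
  by_contra! hne
  have hspan : affineSpan ℝ (interior s ∩ interior t) = ⊤ :=
    (isOpen_interior.inter isOpen_interior).affineSpan_eq_top hne
  exact hg <| AffineMap.ext_on hspan fun x hx ↦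
    le_antisymm (ht x (interior_subset hx.2)) (hs x (interior_subset hx.1))

theorem exists_affineBasis_subset_convexHull {ι : Type*} [Finite ι] (b : AffineBasis ι ℝ E)
    {s : Set E} (hs : Bornology.IsBounded s) :
    ∃ c : AffineBasis ι ℝ E, s ⊆ convexHull ℝ (range c) := by
  have := b.finiteDimensional
  obtain ⟨x, hx⟩ := interior_convexHull_nonempty_iff_affineSpan_eq_top.2 b.tot
  have hnhds : convexHull ℝ (range (-x +ᵥ b)) ∈ 𝓝 0 := by
    have hrange : range (-x +ᵥ b) = -x +ᵥ range b := by
      rw [AffineBasis.coe_vadd, Pi.vadd_def, vadd_set_range]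
    rw [hrange, convexHull_vadd]
    simpa using vadd_mem_nhds_vadd (-x) (mem_interior_iff_mem_nhds.1 hx)
  obtain ⟨r, hsr, hr⟩ := ((NormedSpace.isVonNBounded_of_isBounded ℝ hs hnhds).eventually.and
    (Bornology.eventually_ne_cobounded 0)).exists
  refine ⟨Units.mk0 r hr • (-x +ᵥ b), ?_⟩
  have hrange : range (Units.mk0 r hr • (-x +ᵥ b)) = r • range (-x +ᵥ b) := by
    rw [AffineBasis.coe_smul, Pi.smul_def, smul_set_range]
    rfl
  rwa [hrange, convexHull_smul]

end Topology

section ConstantSign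

variable {𝕜 E : Type*} [Field 𝕜] [LinearOrder 𝕜]

/-- The function `f` does not take both positive and negative values on `s`. For an affine `f`, the
set `s` lies on one side of the hyperplane `f = 0`. -/
def HasConstantSignOn (f : E → 𝕜) (s : Set E) : Prop :=
  (∀ x ∈ s, 0 ≤ f x) ∨ ∀ x ∈ s, f x ≤ 0

theorem HasConstantSignOn.mono {f : E → 𝕜} {s t : Set E} (h : HasConstantSignOn f t)
    (hst : s ⊆ t) : HasConstantSignOn f s :=
  h.imp (fun h x hx ↦ h x (hst hx)) fun h x hx ↦ h x (hst hx)

variable [IsStrictOrderedRing 𝕜] [AddCommGroup E] [Module 𝕜 E] {f : E →ᵃ[𝕜] 𝕜} {s : Set E}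

theorem nonneg_of_mem_convexHull (h : ∀ x ∈ s, 0 ≤ f x) : ∀ x ∈ convexHull 𝕜 s, 0 ≤ f x :=
  convexHull_min h ((convex_Ici 0).affine_preimage f)

theorem nonpos_of_mem_convexHull (h : ∀ x ∈ s, f x ≤ 0) : ∀ x ∈ convexHull 𝕜 s, f x ≤ 0 :=
  convexHull_min h ((convex_Iic 0).affine_preimage f)

theorem HasConstantSignOn.convexHull (h : HasConstantSignOn f s) :
    HasConstantSignOn f (convexHull 𝕜 s) :=
  h.imp nonneg_of_mem_convexHull nonpos_of_mem_convexHull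

theorem exists_mem_openSegment_eq_zero {a b : E} (ha : f a < 0) (hb : 0 < f b) :
    ∃ p ∈ openSegment 𝕜 a b, f p = 0 := by
  have h : (0 : 𝕜) ∈ f '' openSegment 𝕜 a b := by
    rw [image_openSegment, openSegment_eq_Ioo (ha.trans hb)]
    exact ⟨ha, hb⟩
  exact h

end ConstantSign

section Interior

variable {ι E : Type*} [Finite ι] [NormedAddCommGroup E] [NormedSpace ℝ E]

theorem subset_convexHull_or_disjoint_interior (b : AffineBasis ι ℝ E) {s : Set E}
    (hs : ∀ i, HasConstantSignOn (b.coord i) s) :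
    s ⊆ convexHull ℝ (range b) ∨ Disjoint s (interior (convexHull ℝ (range b))) := by
  by_cases h : ∀ i, ∀ x ∈ s, 0 ≤ b.coord i x
  · left
    rw [b.convexHull_eq_nonneg_coord]
    exact fun x hx i ↦ h i x hx
  · right
    push Not at h
    obtain ⟨i, x, hx, hxi⟩ := h
    have hnonpos : ∀ y ∈ s, b.coord i y ≤ 0 := (hs i).resolve_left fun h ↦ (h x hx).not_gt hxi
    rw [b.interior_convexHull, disjoint_left]
    exact fun y hy hpos ↦ (hnonpos y hy).not_gt (hpos i)

theorem disjoint_interior_replaceVertex [DecidableEq ι] (b : AffineBasis ι ℝ E) {i j : ι} {p : E}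
    (hij : i ≠ j) (hp : p ∈ openSegment ℝ (b i) (b j)) :
    Disjoint
      (interior <| convexHull ℝ <| range <|
        replaceVertex b i p (coord_left_pos_of_mem_openSegment b hij hp).ne')
      (interior <| convexHull ℝ <| range <|
        replaceVertex b j p (coord_right_pos_of_mem_openSegment b hij hp).ne') := by
  set c := replaceVertex b i p (coord_left_pos_of_mem_openSegment b hij hp).ne'
  have hcb {l : ι} (hl : l ≠ i) : c l = b l := replaceVertex_of_ne b _ hl
  have hcj : c.coord j (b j) = 1 := by rw [← hcb hij.symm, c.coord_apply_eq]
  refine disjoint_interior_of_nonneg_of_nonpos (g := c.coord j) ?_ ?_ (nonpos_of_mem_convexHull ?_)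
  · intro h
    simp [h] at hcj
  · rw [c.convexHull_eq_nonneg_coord]
    exact fun x hx ↦ hx j
  · rintro _ ⟨l, rfl⟩
    rcases eq_or_ne l j with rfl | hlj
    · rw [replaceVertex_self, coord_replaceVertex_self b _ hij]
    rw [replaceVertex_of_ne b _ hlj]
    rcases eq_or_ne l i with rfl | hli
    · exact (coord_replaceVertex_neg_of_mem_openSegment b hij hp).le
    · rw [← hcb hli, c.coord_apply_ne hlj.symm]

end Interior

section Tiling

variable {ι E : Type*} [NormedAddCommGroup E] [NormedSpace ℝ E]

/-- `T` is a tiling of `R`. A simplex is encoded as the affine basis formed by its vertices, so that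
full-dimensionality is part of the type. -/
structure IsTiling (T : Set (AffineBasis ι ℝ E)) (R : Set E) : Prop where
  finite : T.Finite
  pairwiseDisjoint : T.PairwiseDisjoint fun b ↦ interior (convexHull ℝ (range b))
  biUnion_eq : ⋃ b ∈ T, convexHull ℝ (range b) = R

namespace IsTiling

theorem singleton (b : AffineBasis ι ℝ E) : IsTiling {b} (convexHull ℝ (range b)) where
  finite := finite_singleton b
  pairwiseDisjoint := pairwiseDisjoint_singleton b _
  biUnion_eq := biUnion_singleton b _

variable {T : Set (AffineBasis ι ℝ E)} {R : Set E}

theorem convexHull_subset (hT : IsTiling T R) {b : AffineBasis ι ℝ E} (hb : b ∈ T) :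
    convexHull ℝ (range b) ⊆ R :=
  hT.biUnion_eq ▸ subset_biUnion_of_mem (u := fun b : AffineBasis ι ℝ E ↦ convexHull ℝ (range b)) hb

theorem biUnion (hT : IsTiling T R) {S : AffineBasis ι ℝ E → Set (AffineBasis ι ℝ E)}
    (hS : ∀ b ∈ T, IsTiling (S b) (convexHull ℝ (range b))) : IsTiling (⋃ b ∈ T, S b) R where
  finite := hT.finite.biUnion fun b hb ↦ (hS b hb).finite
  pairwiseDisjoint := by
    refine PairwiseDisjoint.biUnion (fun b hb c hc hbc ↦ ?_) fun b hb ↦ (hS b hb).pairwiseDisjoint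
    exact (hT.pairwiseDisjoint hb hc hbc).mono
      (iSup₂_le fun _ h ↦ interior_mono ((hS b hb).convexHull_subset h))
      (iSup₂_le fun _ h ↦ interior_mono ((hS c hc).convexHull_subset h))
  biUnion_eq := by
    rw [← hT.biUnion_eq]
    simp only [biUnion_iUnion]
    exact iUnion₂_congr fun b hb ↦ (hS b hb).biUnion_eq

theorem exists_refinement (hT : IsTiling T R) {P : AffineBasis ι ℝ E → Prop}
    (hP : ∀ b ∈ T, ∃ S : Set (AffineBasis ι ℝ E),
      IsTiling S (convexHull ℝ (range b)) ∧ ∀ c ∈ S, P c) :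
    ∃ S : Set (AffineBasis ι ℝ E), IsTiling S R ∧ ∀ c ∈ S, P c := by
  choose! S hS hSP using hP
  refine ⟨⋃ b ∈ T, S b, hT.biUnion hS, fun c hc ↦ ?_⟩
  obtain ⟨b, hb, hcb⟩ := mem_iUnion₂.1 hc
  exact hSP b hb c hcb

variable [Finite ι]

theorem biUnion_subset_convexHull_eq (hT : IsTiling T R) (b : AffineBasis ι ℝ E)
    (hbR : convexHull ℝ (range b) ⊆ R)
    (hsign : ∀ c ∈ T, ∀ i, HasConstantSignOn (b.coord i) (convexHull ℝ (range c))) :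
    ⋃ c ∈ {c ∈ T | convexHull ℝ (range c) ⊆ convexHull ℝ (range b)}, convexHull ℝ (range c) =
      convexHull ℝ (range b) := by
  refine Subset.antisymm (iUnion₂_subset fun c hc ↦ hc.2) ?_
  have := b.finiteDimensional
  have hne := interior_convexHull_nonempty_iff_affineSpan_eq_top.2 b.tot
  refine subset_of_isClosed_of_interior_subset (convex_convexHull ℝ _) hne ?_ fun x hx ↦ ?_
  · exact (hT.finite.subset (sep_subset _ _)).isClosed_biUnion
      fun c _ ↦ (finite_range c).isClosed_convexHull ℝ
  · have hxT : x ∈ ⋃ c ∈ T, convexHull ℝ (range c) := hT.biUnion_eq ▸ hbR (interior_subset hx)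
    obtain ⟨c, hc, hxc⟩ := mem_iUnion₂.1 hxT
    rcases subset_convexHull_or_disjoint_interior b (hsign c hc) with hcb | hdisj
    · exact mem_iUnion₂.2 ⟨c, ⟨hc, hcb⟩, hxc⟩
    · exact absurd hx (disjoint_left.1 hdisj hxc)

theorem bisection [DecidableEq ι] (b : AffineBasis ι ℝ E) {i j : ι} {p : E} (hij : i ≠ j)
    (hp : p ∈ openSegment ℝ (b i) (b j)) :
    IsTiling {replaceVertex b i p (coord_left_pos_of_mem_openSegment b hij hp).ne',
      replaceVertex b j p (coord_right_pos_of_mem_openSegment b hij hp).ne'}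
      (convexHull ℝ (range b)) where
  finite := toFinite _
  pairwiseDisjoint := by
    refine pairwise_pair_of_symm.2 fun _ ↦ ?_
    exact disjoint_interior_replaceVertex b hij hp
  biUnion_eq := by
    rw [biUnion_pair, coe_replaceVertex, coe_replaceVertex]
    exact (convexHull_range_eq_union_update b hij (openSegment_subset_segment ℝ _ _ hp)).symm

end IsTiling

variable [Finite ι]

theorem exists_isTiling_hasConstantSignOn (f : E →ᵃ[ℝ] ℝ) (b : AffineBasis ι ℝ E) :
    ∃ T : Set (AffineBasis ι ℝ E), IsTiling T (convexHull ℝ (range b)) ∧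
      ∀ c ∈ T, HasConstantSignOn f (convexHull ℝ (range c)) := by
  classical
  induction hn : (support (f ∘ b)).ncard using Nat.strong_induction_on generalizing b with
  | _ n ih =>
  by_cases hsign : HasConstantSignOn f (range b)
  · exact ⟨{b}, .singleton b, by rintro _ rfl; exact hsign.convexHull⟩
  simp only [HasConstantSignOn, forall_mem_range, not_or, not_forall, not_le] at hsign
  obtain ⟨⟨i, hi⟩, j, hj⟩ := hsign
  have hij : i ≠ j := by rintro rfl; exact hi.not_gt hj
  obtain ⟨p, hp, hfp⟩ := exists_mem_openSegment_eq_zero hi hj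
  have refine_replaceVertex {l : ι} (hl : f (b l) ≠ 0) (hlp : b.coord l p ≠ 0) :
      ∃ T : Set (AffineBasis ι ℝ E), IsTiling T (convexHull ℝ (range (replaceVertex b l p hlp))) ∧
        ∀ c ∈ T, HasConstantSignOn f (convexHull ℝ (range c)) := by
    refine ih _ ?_ (replaceVertex b l p hlp) rfl
    rw [support_comp_replaceVertex f b hlp hfp, ← hn]
    exact ncard_sdiff_singleton_lt_of_mem hl
  refine (IsTiling.bisection b hij hp).exists_refinement ?_
  rintro _ (rfl | rfl)
  exacts [refine_replaceVertex hi.ne _, refine_replaceVertex hj.ne' _]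

theorem exists_isTiling_forall_hasConstantSignOn {F : Set (E →ᵃ[ℝ] ℝ)} (hF : F.Finite)
    (b : AffineBasis ι ℝ E) :
    ∃ T : Set (AffineBasis ι ℝ E), IsTiling T (convexHull ℝ (range b)) ∧
      ∀ c ∈ T, ∀ f ∈ F, HasConstantSignOn f (convexHull ℝ (range c)) := by
  induction F, hF using Set.Finite.induction_on with
  | empty => exact ⟨{b}, .singleton b, by simp⟩
  | @insert f F _ _ ih =>
    obtain ⟨T, hT, hTF⟩ := ih
    refine hT.exists_refinement fun c hc ↦ ?_
    obtain ⟨S, hS, hSf⟩ := exists_isTiling_hasConstantSignOn f c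
    refine ⟨S, hS, fun c' hc' ↦ forall_mem_insert.2 ⟨hSf c' hc', fun g hg ↦ ?_⟩⟩
    exact (hTF c hc g hg).mono (hS.convexHull_subset hc')

theorem exists_isTiling_iUnion_refining {κ : Type*} [Finite κ] (v : κ → AffineBasis ι ℝ E) :
    ∃ T : Set (AffineBasis ι ℝ E), IsTiling T (⋃ i, convexHull ℝ (range (v i))) ∧
      ∀ i, ⋃ c ∈ {c ∈ T | convexHull ℝ (range c) ⊆ convexHull ℝ (range (v i))},
        convexHull ℝ (range c) = convexHull ℝ (range (v i)) := by
  rcases isEmpty_or_nonempty κ with hκ | ⟨⟨i₀⟩⟩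
  · exact ⟨∅, ⟨finite_empty, pairwiseDisjoint_empty, by simp⟩, isEmptyElim⟩
  have hbounded : Bornology.IsBounded (⋃ i, convexHull ℝ (range (v i))) :=
    Bornology.isBounded_iUnion.2 fun i ↦ isBounded_convexHull.2 (finite_range (v i)).isBounded
  obtain ⟨b, hb⟩ := exists_affineBasis_subset_convexHull (v i₀) hbounded
  obtain ⟨T, hT, hsign⟩ := exists_isTiling_forall_hasConstantSignOn
    (finite_range fun q : κ × ι ↦ (v q.1).coord q.2) b
  have htile (i : κ) := hT.biUnion_subset_convexHull_eq (v i) ((subset_iUnion _ i).trans hb)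
    fun c hc j ↦ hsign c hc _ (mem_range_self (i, j))
  set S := fun i ↦ {c ∈ T | convexHull ℝ (range c) ⊆ convexHull ℝ (range (v i))}
  have hST : ⋃ i, S i ⊆ T := iUnion_subset fun i ↦ sep_subset _ _
  refine ⟨⋃ i, S i, ⟨hT.finite.subset hST, hT.pairwiseDisjoint.subset hST, ?_⟩, fun i ↦ ?_⟩
  · rw [biUnion_iUnion]
    exact iUnion_congr htile
  · have hsep : {c ∈ ⋃ j, S j | convexHull ℝ (range c) ⊆ convexHull ℝ (range (v i))} = S i :=
      Subset.antisymm (fun c hc ↦ ⟨hST hc.1, hc.2⟩) fun c hc ↦ ⟨mem_iUnion.2 ⟨i, hc⟩, hc.2⟩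
    rw [hsep, htile i]

theorem exists_common_refining_tiling_general {κ : Type*} [Finite κ] (v : κ → AffineBasis ι ℝ E) :
    ∃ (m : ℕ) (t : Fin m → AffineBasis ι ℝ E),
      (∀ k l, k ≠ l → Disjoint (interior (convexHull ℝ (range (t k))))
        (interior (convexHull ℝ (range (t l))))) ∧
      (⋃ k, convexHull ℝ (range (t k))) = ⋃ i, convexHull ℝ (range (v i)) ∧
      ∀ i, ⋃ k ∈ {k | convexHull ℝ (range (t k)) ⊆ convexHull ℝ (range (v i))},
        convexHull ℝ (range (t k)) = convexHull ℝ (range (v i)) := by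
  obtain ⟨T, hT, htile⟩ := exists_isTiling_iUnion_refining v
  obtain ⟨m, t, ht, rfl⟩ := hT.finite.fin_param
  refine ⟨m, t, fun k l hkl ↦ ?_, ?_, fun i ↦ ?_⟩
  · exact hT.pairwiseDisjoint (mem_range_self k) (mem_range_self l) (ht.ne hkl)
  · rw [← hT.biUnion_eq, biUnion_range]
  · refine .trans ?_ (htile i)
    simp only [mem_ofPred_eq, iUnion_and, biUnion_range]

end Tiling

/-- any finite family of `d`-simplices in `ℝ^d` admits a common refinement:
a finite family of `d`-simplices with pairwise disjoint interiors whose union is the union of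
the given simplices, and such that for each given simplex the members contained in it tile it. -/
theorem exists_common_refining_tiling
    {d : ℕ} (n : ℕ)
    (v : Fin n → Fin (d + 1) → EuclideanSpace ℝ (Fin d))
    -- each `Δᵢ = conv {v i 0, …, v i d}` is a `d`-simplex
    (haff : ∀ i, AffineIndependent ℝ (v i)) :
    ∃ (m : ℕ) (t : Fin m → Fin (d + 1) → EuclideanSpace ℝ (Fin d)),
      -- the members of the family are `d`-simplices
      (∀ k, AffineIndependent ℝ (t k)) ∧
      -- with pairwise disjoint interiors
      (∀ k l, k ≠ l → Disjoint (interior (convexHull ℝ (Set.range (t k))))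
        (interior (convexHull ℝ (Set.range (t l))))) ∧
      -- whose union is `Δ₁ ∪ ⋯ ∪ Δₙ`
      ((⋃ k, convexHull ℝ (Set.range (t k))) = ⋃ i, convexHull ℝ (Set.range (v i))) ∧
      -- and which refines each `Δᵢ`: the members contained in `Δᵢ` have union `Δᵢ`
      (∀ i, (⋃ k ∈ {k : Fin m |
          convexHull ℝ (Set.range (t k)) ⊆ convexHull ℝ (Set.range (v i))},
        convexHull ℝ (Set.range (t k))) = convexHull ℝ (Set.range (v i))) := by
  obtain ⟨m, t, h⟩ := exists_common_refining_tiling_general fun i ↦ (⟨v i, haff i,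
    (haff i).affineSpan_eq_top_iff_card_eq_finrank_add_one.2 (by simp)⟩ : AffineBasis _ _ _)
  exact ⟨m, fun k ↦ t k, fun k ↦ (t k).ind, h⟩
end
end
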